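/- There is an absolute constant c > 0 such that the following holds. Let Σ be a finite alphabet, let k, n be positive integers, let δ, ε > 0, and let C : {0,1}^k → Σ^n be a code. Suppose there exist 3-uniform hypergraph matchings H_1, …, H_k on [n] with |H_i| ≥ εδn/9 for every i ∈ [k], and for every i ∈ [k] and every hyperedge C ∈ H_i a function f_C : Σ^3 → {0,1} such that Pr_{b uniform in {0,1}^k}[b_i = f_C(C(b)|_C)] ≥ 1/2 + ε/2 (this is exactly the combinatorial structure guaranteed for any (3, δ, ε)-locally decodable code over Σ by the Katz–Trevisan reduction). Then k^3 ≤ |Σ|^41 · n · c · (log(|Σ| · n))^6 / (ε^32 · δ^16). -/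

import Mathlib

open Finset
open scoped Classical

noncomputable section

/-- `H` is a `q`-uniform hypergraph matching on `[n]`. -/
def IsMatching {n : ℕ} (q : ℕ) (H : Finset (Finset (Fin n))) : Prop :=
  (∀ C ∈ H, C.card = q) ∧ Set.Pairwise (H : Set (Finset (Fin n))) Disjoint

open scoped BigOperators

/-! In `±1` form the hypothesis says that, for every triple `C` of `H i`, the sign of `b i`
correlates with a function of the three symbols of the codeword of `b` on `C`. Replacing each
symbol by all its characters makes the code `±1`-valued and turns that function into a single
product of three signs, at the cost of a power of `|α|` in the number of vertices and in the
correlation.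

The basic tool is a bound on `𝔼 b, x bᵀ (∑ i, ± B i) y b` for matrices `B i` with small row and
column sums: iterated Cauchy–Schwarz bounds the form by a high trace moment, and in the expected
trace only words in which every index occurs evenly survive, as for a Rademacher sum. Two-query
constraints are handled by it directly, and a triple two of whose vertices lie together in more
than `d` triples is a two-query constraint on a pair and a single vertex.

For the remaining triples, Cauchy–Schwarz over the first vertex replaces pairs of triples that
share it by four-query constraints on the other vertices; a random cut of the colours makes the two
signs of such a constraint independent. They become edges of a Kikuchi graph, whose vertices are
tuples of length `l`, and after the vertices of atypically large degree are pruned the matrix bound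
applies again. The two cases balance for `d` about `log n` and `l ^ 2` about `n * d / k`, up to
powers of `ε` and `δ`. -/

section RandomSigns

/-- The `±1` encoding of a bit, `false ↦ 1` and `true ↦ -1`. -/
def bitSign (t : Bool) : ℝ := if t then -1 else 1

lemma bitSign_mul_self (t : Bool) : bitSign t * bitSign t = 1 := by
  cases t <;> simp [bitSign]

variable {ι : Type*} [Fintype ι] [DecidableEq ι]

lemma sum_prod_bitSign_pow_nonneg (a : ι → ℕ) :
    0 ≤ ∑ b : ι → Bool, ∏ i, bitSign (b i) ^ a i := by
  rw [← Fintype.prod_sum fun i t => bitSign t ^ a i]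
  refine Finset.prod_nonneg fun i _ => ?_
  rcases Nat.even_or_odd (a i) with h | h <;> simp [bitSign, h.neg_one_pow]

lemma expect_exp_mul_sum_bitSign (t : ℝ) :
    𝔼 b : ι → Bool, Real.exp (t * ∑ i, bitSign (b i)) = Real.cosh t ^ Fintype.card ι := by
  simp_rw [Finset.mul_sum, Real.exp_sum]
  rw [Fintype.expect_eq_sum_div_card, ← Fintype.prod_sum fun _ s => Real.exp (t * bitSign s)]
  simp only [Fintype.sum_bool, bitSign, prod_const, card_univ, Fintype.card_pi, Fintype.card_bool]
  push_cast
  rw [← div_pow, Real.cosh_eq]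
  simp [add_comm]

lemma expect_exp_mul_sum_bitSign_le (t : ℝ) :
    𝔼 b : ι → Bool, Real.exp (t * ∑ i, bitSign (b i))
      ≤ Real.exp (Fintype.card ι * (t ^ 2 / 2)) := by
  rw [expect_exp_mul_sum_bitSign, Real.exp_nat_mul]
  gcongr
  exact Real.cosh_le_exp_half_sq t

lemma pow_le_factorial_mul_exp_add_exp_neg {m : ℕ} (hm : Even m) (y : ℝ) :
    y ^ m ≤ m.factorial * (Real.exp y + Real.exp (-y)) := by
  have h := Real.pow_div_factorial_le_exp |y| (abs_nonneg y) m
  rw [hm.pow_abs, div_le_iff₀' (by positivity)] at h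
  exact h.trans (by gcongr; exact Real.exp_abs_le y)

lemma pow_mul_expect_sum_bitSign_pow_le {m : ℕ} (hm : Even m) (t : ℝ) :
    t ^ m * 𝔼 b : ι → Bool, (∑ i, bitSign (b i)) ^ m
      ≤ m.factorial * (2 * Real.exp (Fintype.card ι * (t ^ 2 / 2))) := by
  calc t ^ m * 𝔼 b : ι → Bool, (∑ i, bitSign (b i)) ^ m
      ≤ 𝔼 b : ι → Bool, m.factorial * (Real.exp (t * ∑ i, bitSign (b i))
          + Real.exp (-t * ∑ i, bitSign (b i))) := by
        rw [Finset.mul_expect]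
        refine Finset.expect_le_expect fun b _ => ?_
        rw [← mul_pow, neg_mul]
        exact pow_le_factorial_mul_exp_add_exp_neg hm _
    _ ≤ _ := by
        rw [← Finset.mul_expect, Finset.expect_add_distrib, two_mul]
        gcongr
        · exact expect_exp_mul_sum_bitSign_le t
        · simpa using expect_exp_mul_sum_bitSign_le (ι := ι) (-t)

lemma expect_sum_bitSign_pow_le [Nonempty ι] {r : ℕ} (hr : 1 ≤ r) :
    𝔼 b : ι → Bool, (∑ i, bitSign (b i)) ^ (2 * r)
      ≤ (Real.exp 2 * (2 * r) * Fintype.card ι) ^ r := by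
  set k : ℝ := (Fintype.card ι : ℝ) with hk
  have hk0 : 0 < k := by rw [hk]; exact_mod_cast Fintype.card_pos
  have hr1 : (1 : ℝ) ≤ r := by exact_mod_cast hr
  -- the choice of `t` that minimises `exp (k t² / 2) / t ^ (2 r)`
  set t : ℝ := √(2 * r / k)
  have ht2 : t ^ 2 = 2 * r / k := Real.sq_sqrt (by positivity)
  have hfac : ((2 * r).factorial : ℝ) ≤ (2 * r) ^ (2 * r) := by
    exact_mod_cast Nat.factorial_le_pow (2 * r)
  have hexp : 2 * Real.exp r ≤ Real.exp 2 ^ r := by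
    rw [← Real.exp_nat_mul, mul_two, Real.exp_add]
    gcongr
    linarith [Real.add_one_le_exp (r : ℝ)]
  have ht : 0 < t ^ (2 * r) := by rw [pow_mul, ht2]; positivity
  refine le_of_mul_le_mul_left ?_ ht
  calc t ^ (2 * r) * 𝔼 b : ι → Bool, (∑ i, bitSign (b i)) ^ (2 * r)
      ≤ (2 * r).factorial * (2 * Real.exp (k * (t ^ 2 / 2))) :=
        pow_mul_expect_sum_bitSign_pow_le (even_two_mul r) t
    _ = (2 * r).factorial * (2 * Real.exp r) := by
        rw [ht2, show k * (2 * r / k / 2) = r by field_simp]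
    _ ≤ (2 * r) ^ (2 * r) * Real.exp 2 ^ r := by gcongr
    _ = t ^ (2 * r) * (Real.exp 2 * (2 * r) * k) ^ r := by
        rw [pow_mul t, ht2, pow_mul, ← mul_pow, ← mul_pow]
        congr 1; field_simp

lemma prod_bitSign_pow_mul_bitSign (a : ι → ℕ) (b : ι → Bool) (i : ι) :
    (∏ j, bitSign (b j) ^ a j) * bitSign (b i)
      = ∏ j, bitSign (b j) ^ (a + Pi.single i 1 : ι → ℕ) j := by
  simp_rw [Pi.add_apply, pow_add, Finset.prod_mul_distrib]
  congr 1
  rw [Finset.prod_eq_single i] <;> simp +contextual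

lemma sum_prod_bitSign_smul_pow_succ {A : Type*} [Ring A] [Algebra ℝ A]
    (B : ι → A) (m : ℕ) (a : ι → ℕ) :
    ∑ b : ι → Bool, (∏ i, bitSign (b i) ^ a i) • (∑ i, bitSign (b i) • B i) ^ (m + 1)
      = ∑ i, B i * ∑ b : ι → Bool, (∏ j, bitSign (b j) ^ (a + Pi.single i 1 : ι → ℕ) j) •
          (∑ i, bitSign (b i) • B i) ^ m := by
  simp_rw [Finset.mul_sum]
  rw [Finset.sum_comm]
  refine Finset.sum_congr rfl fun b _ => ?_
  rw [pow_succ', Finset.sum_mul, Finset.smul_sum]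
  refine Finset.sum_congr rfl fun i _ => ?_
  rw [← prod_bitSign_pow_mul_bitSign, mul_smul_comm, smul_mul_assoc, smul_smul]

/- Expanding the power, every word in the `B i` is weighted by a nonnegative expectation, so the
norm is largest when all the words have norm `β ^ m`. The exponents `a` make the induction on `m`
work. -/
lemma norm_sum_prod_bitSign_smul_pow_le {A : Type*} [NormedRing A] [NormedAlgebra ℝ A]
    [NormOneClass A] {B : ι → A} {β : ℝ} (hB : ∀ i, ‖B i‖ ≤ β) (m : ℕ) (a : ι → ℕ) :
    ‖∑ b : ι → Bool, (∏ i, bitSign (b i) ^ a i) • (∑ i, bitSign (b i) • B i) ^ m‖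
      ≤ β ^ m * ∑ b : ι → Bool, (∏ i, bitSign (b i) ^ a i) * (∑ i, bitSign (b i)) ^ m := by
  induction m generalizing a with
  | zero =>
    simp only [pow_zero, mul_one, one_mul, ← Finset.sum_smul]
    rw [norm_smul, norm_one, mul_one, Real.norm_of_nonneg (sum_prod_bitSign_pow_nonneg a)]
  | succ m ih =>
    have hscalar := sum_prod_bitSign_smul_pow_succ (fun _ : ι => (1 : ℝ)) m a
    simp only [smul_eq_mul, mul_one, one_mul] at hscalar
    rw [sum_prod_bitSign_smul_pow_succ, hscalar, Finset.mul_sum]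
    refine norm_sum_le_of_le _ fun i _ => ?_
    calc _ ≤ ‖B i‖ * _ := norm_mul_le _ _
      _ ≤ β * _ := mul_le_mul (hB i) (ih _) (norm_nonneg _) ((norm_nonneg _).trans (hB i))
      _ = _ := by rw [pow_succ', mul_assoc]

lemma norm_sum_sum_bitSign_smul_pow_le {A : Type*} [NormedRing A] [NormedAlgebra ℝ A]
    [NormOneClass A] {B : ι → A} {β : ℝ} (hB : ∀ i, ‖B i‖ ≤ β) (m : ℕ) :
    ‖∑ b : ι → Bool, (∑ i, bitSign (b i) • B i) ^ m‖
      ≤ β ^ m * ∑ b : ι → Bool, (∑ i, bitSign (b i)) ^ m := by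
  simpa using norm_sum_prod_bitSign_smul_pow_le hB m 0

end RandomSigns

section TraceMoment

open scoped Matrix Matrix.Norms.Operator

variable {ι Z : Type*} [Fintype Z]

lemma trace_le_card_mul_linfty_opNorm (A : Matrix Z Z ℝ) : A.trace ≤ Fintype.card Z * ‖A‖ := by
  have hentry (z : Z) : A z z ≤ ‖A‖ := by
    have hrow : ‖A z z‖₊ ≤ ∑ w, ‖A z w‖₊ :=
      Finset.single_le_sum (f := fun w => ‖A z w‖₊) (fun _ _ => zero_le) (mem_univ z)
    have hsup := Finset.le_sup (f := fun i => ∑ j, ‖A i j‖₊) (mem_univ z)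
    rw [Matrix.linfty_opNorm_def]
    exact (le_abs_self _).trans (by exact_mod_cast hrow.trans hsup)
  calc A.trace ≤ ∑ _z : Z, ‖A‖ := Finset.sum_le_sum fun z _ => hentry z
    _ = _ := by simp

lemma linfty_opNorm_le_of_row_sum_abs_le {A : Matrix Z Z ℝ} {β : ℝ} (hβ : 0 ≤ β)
    (hA : ∀ z, ∑ w, |A z w| ≤ β) : ‖A‖ ≤ β := by
  lift β to NNReal using hβ
  rw [Matrix.linfty_opNorm_def]
  refine NNReal.coe_le_coe.2 (Finset.sup_le fun z _ => ?_)
  rw [← NNReal.coe_le_coe]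
  simpa using hA z

lemma dotProduct_mulVec_sq_le (A : Matrix Z Z ℝ) (v : Z → ℝ) :
    (v ⬝ᵥ A *ᵥ v) ^ 2 ≤ (v ⬝ᵥ v) * (A *ᵥ v ⬝ᵥ A *ᵥ v) := by
  simpa [dotProduct, sq] using Finset.sum_mul_sq_le_sq_mul_sq univ v (A *ᵥ v)

lemma mulVec_dotProduct_mulVec_le (A : Matrix Z Z ℝ) (v : Z → ℝ) :
    A *ᵥ v ⬝ᵥ A *ᵥ v ≤ (v ⬝ᵥ v) * (A * Aᵀ).trace := by
  have htrace : (A * Aᵀ).trace = ∑ z, ∑ w, A z w ^ 2 := by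
    simp [Matrix.trace, Matrix.mul_apply, sq]
  rw [htrace, Finset.mul_sum]
  refine Finset.sum_le_sum fun z _ => ?_
  simpa [Matrix.mulVec, dotProduct, sq, mul_comm] using
    Finset.sum_mul_sq_le_sq_mul_sq univ (A z) v

variable [DecidableEq Z]

lemma mulVec_dotProduct_mulVec_of_isSymm {A : Matrix Z Z ℝ} (hA : A.IsSymm) (v : Z → ℝ) :
    A *ᵥ v ⬝ᵥ A *ᵥ v = v ⬝ᵥ (A ^ 2) *ᵥ v := by
  rw [sq, ← Matrix.mulVec_mulVec, Matrix.dotProduct_mulVec v A, ← Matrix.mulVec_transpose, hA]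

lemma trace_pow_nonneg_of_isSymm {A : Matrix Z Z ℝ} (hA : A.IsSymm) {m : ℕ} (hm : Even m) :
    0 ≤ (A ^ m).trace := by
  obtain ⟨r, rfl⟩ := hm
  have h := (Matrix.posSemidef_conjTranspose_mul_self (A ^ r)).trace_nonneg
  rwa [Matrix.conjTranspose_eq_transpose_of_trivial, (hA.pow r).eq, ← pow_add] at h

lemma dotProduct_mulVec_pow_le {A : Matrix Z Z ℝ} (hA : A.IsSymm) (v : Z → ℝ) (s : ℕ) :
    (v ⬝ᵥ A *ᵥ v) ^ 2 ^ (s + 1) ≤ (v ⬝ᵥ v) ^ 2 ^ (s + 1) * (A ^ 2 ^ (s + 1)).trace := by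
  have hv : 0 ≤ v ⬝ᵥ v := Finset.sum_nonneg fun i _ => mul_self_nonneg _
  induction s generalizing A with
  | zero =>
    have htrace := mulVec_dotProduct_mulVec_le A v
    rw [hA.eq, ← sq] at htrace
    calc (v ⬝ᵥ A *ᵥ v) ^ 2 ^ (0 + 1) ≤ (v ⬝ᵥ v) * (A *ᵥ v ⬝ᵥ A *ᵥ v) := by
          simpa using dotProduct_mulVec_sq_le A v
      _ ≤ (v ⬝ᵥ v) * ((v ⬝ᵥ v) * (A ^ 2).trace) := by gcongr
      _ = _ := by rw [zero_add, pow_one]; ring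
  | succ s ih =>
    have hsq := ih (hA.pow 2)
    rw [← pow_mul, ← pow_succ'] at hsq
    calc (v ⬝ᵥ A *ᵥ v) ^ 2 ^ (s + 1 + 1) = ((v ⬝ᵥ A *ᵥ v) ^ 2) ^ 2 ^ (s + 1) := by
          rw [← pow_mul, ← pow_succ']
      _ ≤ ((v ⬝ᵥ v) * (v ⬝ᵥ (A ^ 2) *ᵥ v)) ^ 2 ^ (s + 1) := by
          gcongr
          rw [← mulVec_dotProduct_mulVec_of_isSymm hA]
          exact dotProduct_mulVec_sq_le A v
      _ ≤ (v ⬝ᵥ v) ^ 2 ^ (s + 1) * ((v ⬝ᵥ v) ^ 2 ^ (s + 1) * (A ^ 2 ^ (s + 1 + 1)).trace) := by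
          rw [mul_pow]
          gcongr
      _ = _ := by ring

variable [Fintype ι] [DecidableEq ι]

lemma expect_trace_sum_bitSign_smul_pow_le [Nonempty Z] {B : ι → Matrix Z Z ℝ} {β : ℝ}
    (hB : ∀ i, ‖B i‖ ≤ β) (m : ℕ) :
    𝔼 b : ι → Bool, ((∑ i, bitSign (b i) • B i) ^ m).trace
      ≤ Fintype.card Z * (β ^ m * 𝔼 b : ι → Bool, (∑ i, bitSign (b i)) ^ m) := by
  rw [Fintype.expect_eq_sum_div_card, Fintype.expect_eq_sum_div_card, ← Matrix.trace_sum,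
    ← mul_div_assoc, ← mul_div_assoc]
  gcongr
  exact (trace_le_card_mul_linfty_opNorm _).trans
    (by gcongr; exact norm_sum_sum_bitSign_smul_pow_le hB m)

lemma expect_pow_le_of_even {Ω : Type*} [Fintype Ω] [Nonempty Ω] (y : Ω → ℝ) {m : ℕ}
    (hm : Even m) : (𝔼 b, y b) ^ m ≤ 𝔼 b, y b ^ m := by
  have h := Real.pow_arith_mean_le_arith_mean_pow_of_even univ
    (fun _ : Ω => 1 / (Fintype.card Ω : ℝ)) y (fun _ _ => by positivity) (by simp) hm
  rw [Fintype.expect_eq_sum_div_card, Fintype.expect_eq_sum_div_card]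
  simpa [← Finset.mul_sum, div_eq_inv_mul] using h

lemma expect_quadForm_pow_le [Nonempty ι] [Nonempty Z] {B : ι → Matrix Z Z ℝ}
    (hsymm : ∀ i, (B i).IsSymm) {β : ℝ} (hB : ∀ i, ‖B i‖ ≤ β)
    {v : (ι → Bool) → Z → ℝ} {X : ℝ} (hv : ∀ b, ∑ z, v b z ^ 2 ≤ X) (s : ℕ) :
    (𝔼 b : ι → Bool, v b ⬝ᵥ (∑ i, bitSign (b i) • B i) *ᵥ v b) ^ 2 ^ (s + 1)
      ≤ Fintype.card Z
        * (Real.exp 2 * 2 ^ (s + 1) * Fintype.card ι * X ^ 2 * β ^ 2) ^ 2 ^ s := by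
  have hX : 0 ≤ X := (Finset.sum_nonneg fun i _ => sq_nonneg _).trans (hv fun _ => true)
  have hβ : 0 ≤ β := (norm_nonneg _).trans (hB (Classical.arbitrary ι))
  have htwo : 2 ^ (s + 1) = 2 * 2 ^ s := pow_succ' 2 s
  have heven : Even (2 ^ (s + 1)) := htwo ▸ even_two_mul _
  set M : (ι → Bool) → Matrix Z Z ℝ := fun b => ∑ i, bitSign (b i) • B i with hM
  have hMsymm (b : ι → Bool) : (M b).IsSymm := by
    simp [hM, Matrix.IsSymm, Matrix.transpose_sum, (hsymm _).eq]
  have hmoment := expect_sum_bitSign_pow_le (ι := ι) (r := 2 ^ s) Nat.one_le_two_pow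
  rw [← htwo] at hmoment
  calc (𝔼 b, v b ⬝ᵥ M b *ᵥ v b) ^ 2 ^ (s + 1)
      ≤ 𝔼 b, (v b ⬝ᵥ M b *ᵥ v b) ^ 2 ^ (s + 1) := expect_pow_le_of_even _ heven
    _ ≤ 𝔼 b, X ^ 2 ^ (s + 1) * (M b ^ 2 ^ (s + 1)).trace := by
        refine Finset.expect_le_expect fun b _ => (dotProduct_mulVec_pow_le (hMsymm b) _ s).trans ?_
        have hvv : v b ⬝ᵥ v b ≤ X := by simpa [dotProduct, sq] using hv b
        have hvv0 : 0 ≤ v b ⬝ᵥ v b := Finset.sum_nonneg fun i _ => mul_self_nonneg _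
        have := trace_pow_nonneg_of_isSymm (hMsymm b) heven
        gcongr
    _ ≤ X ^ 2 ^ (s + 1) * (Fintype.card Z * (β ^ 2 ^ (s + 1)
          * (Real.exp 2 * (2 * (2 ^ s : ℕ)) * Fintype.card ι) ^ 2 ^ s)) := by
        rw [← Finset.mul_expect]
        gcongr
        exact (expect_trace_sum_bitSign_smul_pow_le hB _).trans (by gcongr)
    _ = _ := by
        push_cast
        rw [htwo, pow_mul X, pow_mul β, mul_left_comm, ← mul_pow, ← mul_pow]
        congr 2
        rw [pow_succ' (2 : ℝ) s]
        ring

lemma exists_two_pow_succ_mem_Icc {L : ℝ} (hL : 0 ≤ L) :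
    ∃ s : ℕ, (2 : ℝ) ^ (s + 1) ∈ Set.Icc L (2 * (L + 1)) := by
  obtain ⟨s, h1, h2⟩ := exists_nat_pow_near (x := L + 1) (y := (2 : ℝ)) (by linarith) (by norm_num)
  exact ⟨s, by linarith, by rw [pow_succ]; linarith⟩

lemma exp_two_mul_exp_two_le : Real.exp 2 * Real.exp 2 ≤ 56 := by
  have h : Real.exp 2 * Real.exp 2 = Real.exp 1 ^ 4 := by
    rw [← Real.exp_add, ← Real.exp_nat_mul]; norm_num
  rw [h]
  calc Real.exp 1 ^ 4 ≤ 2.7182818286 ^ 4 := by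
        gcongr
        exact Real.exp_one_lt_d9.le
    _ ≤ 56 := by norm_num

/-- The exponent in the trace method is chosen close to `log |Z|`, so that taking the root turns
the factor `|Z|` into a constant. -/
lemma expect_quadForm_sq_le [Nonempty ι] [Nonempty Z] {B : ι → Matrix Z Z ℝ}
    (hsymm : ∀ i, (B i).IsSymm) {β : ℝ} (hB : ∀ i, ‖B i‖ ≤ β)
    {v : (ι → Bool) → Z → ℝ} {X : ℝ} (hv : ∀ b, ∑ z, v b z ^ 2 ≤ X) :
    (𝔼 b : ι → Bool, v b ⬝ᵥ (∑ i, bitSign (b i) • B i) *ᵥ v b) ^ 2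
      ≤ 112 * Fintype.card ι * X ^ 2 * β ^ 2 * (Real.log (Fintype.card Z) + 1) := by
  have hZ : (1 : ℝ) ≤ Fintype.card Z := by exact_mod_cast Fintype.card_pos
  obtain ⟨s, hlog, hs⟩ := exists_two_pow_succ_mem_Icc (Real.log_nonneg hZ)
  have hcard : (Fintype.card Z : ℝ) ≤ Real.exp 2 ^ 2 ^ s := by
    rw [← Real.exp_nat_mul, ← Real.log_le_iff_le_exp (by linarith)]
    exact hlog.trans (le_of_eq (by push_cast; rw [pow_succ]))
  have hpow := expect_quadForm_pow_le hsymm hB hv s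
  rw [pow_succ' 2 s, pow_mul] at hpow
  have hroot := le_of_pow_le_pow_left₀ (by positivity) (by positivity) <| hpow.trans <|
    (mul_le_mul_of_nonneg_right hcard (by positivity)).trans_eq (mul_pow ..).symm
  refine hroot.trans ?_
  calc Real.exp 2 * (Real.exp 2 * 2 ^ (s + 1) * Fintype.card ι * X ^ 2 * β ^ 2)
      = Real.exp 2 * Real.exp 2 * 2 ^ (s + 1) * Fintype.card ι * X ^ 2 * β ^ 2 := by ring
    _ ≤ 56 * (2 * (Real.log (Fintype.card Z) + 1)) * Fintype.card ι * X ^ 2 * β ^ 2 := by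
        gcongr
        exact exp_two_mul_exp_two_le
    _ = _ := by ring

end TraceMoment

section EdgeMatrix

open scoped Matrix Matrix.Norms.Operator

variable {F Z : Type*} [Fintype F] [DecidableEq Z]

/-- The symmetric weighted adjacency matrix of the multigraph with edges `src f — tgt f`, in which
the edge `f` has weight `wt f`. -/
def edgeMatrix (src tgt : F → Z) (wt : F → ℝ) : Matrix Z Z ℝ :=
  ∑ f, wt f • (Matrix.single (src f) (tgt f) 1 + Matrix.single (tgt f) (src f) 1)

lemma edgeMatrix_isSymm (src tgt : F → Z) (wt : F → ℝ) : (edgeMatrix src tgt wt).IsSymm := by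
  simp [edgeMatrix, Matrix.IsSymm, Matrix.transpose_sum, add_comm]

lemma sum_smul_edgeMatrix {ι : Type*} [Fintype ι] (src tgt : F → Z) (c : ι → ℝ)
    (wt : ι → F → ℝ) :
    ∑ i, c i • edgeMatrix src tgt (wt i) = edgeMatrix src tgt fun f => ∑ i, c i * wt i f := by
  simp only [edgeMatrix, Finset.smul_sum, Finset.sum_smul, smul_smul]
  exact Finset.sum_comm

variable [Fintype Z]

lemma dotProduct_edgeMatrix_mulVec (src tgt : F → Z) (wt : F → ℝ) (v : Z → ℝ) :
    v ⬝ᵥ edgeMatrix src tgt wt *ᵥ v = 2 * ∑ f, wt f * (v (src f) * v (tgt f)) := by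
  have hsingle (z w : Z) : v ⬝ᵥ Matrix.single z w 1 *ᵥ v = v z * v w := by
    rw [Matrix.single_mulVec, one_mul, ← Pi.single, dotProduct_single]
  rw [edgeMatrix, Matrix.sum_mulVec, dotProduct_sum, Finset.mul_sum]
  refine Finset.sum_congr rfl fun f _ => ?_
  rw [Matrix.smul_mulVec, dotProduct_smul, Matrix.add_mulVec, dotProduct_add, hsingle, hsingle,
    smul_eq_mul]
  ring

lemma sum_abs_edgeMatrix_le (src tgt : F → Z) (wt : F → ℝ) (z : Z) :
    ∑ w, |edgeMatrix src tgt wt z w|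
      ≤ (∑ f with src f = z, |wt f|) + ∑ f with tgt f = z, |wt f| := by
  calc ∑ w, |edgeMatrix src tgt wt z w|
      ≤ ∑ w, ∑ f, ((if src f = z ∧ tgt f = w then |wt f| else 0)
          + if tgt f = z ∧ src f = w then |wt f| else 0) := by
        refine Finset.sum_le_sum fun w _ => ?_
        rw [edgeMatrix, Matrix.sum_apply]
        refine (Finset.abs_sum_le_sum_abs _ _).trans (Finset.sum_le_sum fun f _ => ?_)
        rw [Matrix.smul_apply, Matrix.add_apply, Matrix.single_apply, Matrix.single_apply,
          smul_add]
        refine (abs_add_le _ _).trans (le_of_eq ?_)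
        simp [apply_ite abs]
    _ = _ := by
        rw [Finset.sum_comm, Finset.sum_filter, Finset.sum_filter, ← Finset.sum_add_distrib]
        refine Finset.sum_congr rfl fun f _ => ?_
        rw [Finset.sum_add_distrib]
        by_cases hs : src f = z <;> by_cases ht : tgt f = z <;> simp [hs, ht]

end EdgeMatrix

section EdgeSum

open scoped Matrix Matrix.Norms.Operator

variable {ι Z F : Type*} [Fintype ι] [DecidableEq ι] [Nonempty ι] [Fintype Z] [DecidableEq Z]
  [Nonempty Z] [Fintype F]

lemma expect_edge_sum_sq_le (col : F → ι) (src tgt : F → Z) (wt : F → ℝ) {β : ℝ}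
    (hdeg : ∀ i z, (∑ f with col f = i ∧ src f = z, |wt f|)
      + ∑ f with col f = i ∧ tgt f = z, |wt f| ≤ β)
    {v : (ι → Bool) → Z → ℝ} {X : ℝ} (hv : ∀ b, ∑ z, v b z ^ 2 ≤ X) :
    (𝔼 b : ι → Bool, ∑ f, bitSign (b (col f)) * wt f * (v b (src f) * v b (tgt f))) ^ 2
      ≤ 28 * Fintype.card ι * X ^ 2 * β ^ 2 * (Real.log (Fintype.card Z) + 1) := by
  set B : ι → Matrix Z Z ℝ := fun i => edgeMatrix src tgt fun f => if col f = i then wt f else 0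
  have hnorm (i : ι) : ‖B i‖ ≤ β := by
    have hrow (z : Z) : ∑ w, |B i z w| ≤ β := by
      refine (sum_abs_edgeMatrix_le _ _ _ z).trans ((hdeg i z).trans' (le_of_eq ?_))
      simp [apply_ite abs, Finset.sum_ite, Finset.filter_filter, and_comm]
    exact linfty_opNorm_le_of_row_sum_abs_le
      ((Finset.sum_nonneg fun w _ => abs_nonneg _).trans (hrow (Classical.arbitrary Z))) hrow
  have hquad (b : ι → Bool) : v b ⬝ᵥ (∑ i, bitSign (b i) • B i) *ᵥ v b
      = 2 * ∑ f, bitSign (b (col f)) * wt f * (v b (src f) * v b (tgt f)) := by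
    rw [sum_smul_edgeMatrix, dotProduct_edgeMatrix_mulVec]
    simp
  have h := expect_quadForm_sq_le (B := B) (fun i => edgeMatrix_isSymm ..) hnorm hv
  simp_rw [hquad] at h
  rw [← Finset.mul_expect, mul_pow] at h
  linarith

lemma sum_filter_abs_le_one_of_injective {S : Type*} [DecidableEq S] {φ : F → S}
    (hφ : Function.Injective φ) {wt : F → ℝ} (hwt : ∀ f, |wt f| ≤ 1) (a : S) :
    ∑ f with φ f = a, |wt f| ≤ 1 := by
  have hcard : #{f | φ f = a} ≤ 1 :=
    Finset.card_le_one.2 fun f hf g hg => hφ (by simp_all)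
  calc ∑ f with φ f = a, |wt f| ≤ #{f | φ f = a} • (1 : ℝ) :=
        Finset.sum_le_card_nsmul _ _ _ fun f _ => hwt f
    _ ≤ 1 := by simpa using hcard

end EdgeSum

section TwoQueries

variable {ι V W E : Type*} [Fintype ι] [DecidableEq ι] [Nonempty ι] [Fintype V] [Nonempty V]
  [Fintype W] [Nonempty W] [Fintype E]

lemma expect_bipartite_sum_sq_le {col : E → ι} {src : E → V} {tgt : E → W}
    (hsrc : Function.Injective fun e => (col e, src e))
    (htgt : Function.Injective fun e => (col e, tgt e))
    {s : E → ℝ} (hs : ∀ e, |s e| ≤ 1) {x : (ι → Bool) → V → ℝ} (hx : ∀ b v, x b v ^ 2 ≤ 1)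
    {y : (ι → Bool) → W → ℝ} (hy : ∀ b w, y b w ^ 2 ≤ 1) :
    (𝔼 b : ι → Bool, ∑ e, bitSign (b (col e)) * s e * (x b (src e) * y b (tgt e))) ^ 2
      ≤ 112 * Fintype.card ι * Fintype.card V * Fintype.card W
        * (Real.log (Fintype.card V + Fintype.card W) + 1) := by
  have hV : (0 : ℝ) < Fintype.card V := by exact_mod_cast Fintype.card_pos
  have hW : (0 : ℝ) < Fintype.card W := by exact_mod_cast Fintype.card_pos
  -- Rescaling the two sides by `c` and `c⁻¹` makes their norms equal.
  obtain ⟨c, hc0, hc⟩ : ∃ c : ℝ, 0 < c ∧ c ^ 2 = √(Fintype.card W) / √(Fintype.card V) :=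
    ⟨√(√(Fintype.card W) / √(Fintype.card V)), by positivity, Real.sq_sqrt (by positivity)⟩
  set z : (ι → Bool) → V ⊕ W → ℝ := fun b => Sum.elim (c • x b) (c⁻¹ • y b) with hz
  have hVV : √(Fintype.card V : ℝ) ^ 2 = Fintype.card V := Real.sq_sqrt hV.le
  have hWW : √(Fintype.card W : ℝ) ^ 2 = Fintype.card W := Real.sq_sqrt hW.le
  have hznorm (b : ι → Bool) : ∑ t, z b t ^ 2 ≤ 2 * (√(Fintype.card V) * √(Fintype.card W)) := by
    calc ∑ t, z b t ^ 2 = c ^ 2 * ∑ v, x b v ^ 2 + (c ^ 2)⁻¹ * ∑ w, y b w ^ 2 := by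
          simp [hz, mul_pow, Finset.mul_sum]
      _ ≤ c ^ 2 * ∑ _v : V, 1 + (c ^ 2)⁻¹ * ∑ _w : W, 1 := by
          gcongr with v _ w _
          exacts [hx b v, hy b w]
      _ = c ^ 2 * √(Fintype.card V) ^ 2 + (c ^ 2)⁻¹ * √(Fintype.card W) ^ 2 := by
          simp [hVV, hWW]
      _ = 2 * (√(Fintype.card V) * √(Fintype.card W)) := by
          rw [hc]
          field_simp
          ring
  have hdeg (i : ι) (t : V ⊕ W) :
      (∑ e with col e = i ∧ (Sum.inl (src e) : V ⊕ W) = t, |s e|)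
        + ∑ e with col e = i ∧ (Sum.inr (tgt e) : V ⊕ W) = t, |s e| ≤ 1 := by
    rcases t with v | w
    · simpa using sum_filter_abs_le_one_of_injective hsrc hs (i, v)
    · simpa using sum_filter_abs_le_one_of_injective htgt hs (i, w)
  have hprod (b : ι → Bool) (e : E) :
      z b (Sum.inl (src e)) * z b (Sum.inr (tgt e)) = x b (src e) * y b (tgt e) := by
    simp only [hz, Sum.elim_inl, Sum.elim_inr, Pi.smul_apply, smul_eq_mul]
    field_simp
  have h := expect_edge_sum_sq_le col (fun e => Sum.inl (src e)) (fun e => Sum.inr (tgt e)) s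
    hdeg hznorm
  simp only [hprod, Fintype.card_sum, Nat.cast_add] at h
  calc _ ≤ _ := h
    _ = 112 * Fintype.card ι * √(Fintype.card V) ^ 2 * √(Fintype.card W) ^ 2
        * (Real.log (Fintype.card V + Fintype.card W) + 1) := by ring
    _ = _ := by rw [hVV, hWW]

lemma sq_mul_card_le_of_two_queries {col : E → ι} {src : E → V} {tgt : E → W}
    (hsrc : Function.Injective fun e => (col e, src e))
    (htgt : Function.Injective fun e => (col e, tgt e))
    {s : E → ℝ} (hs : ∀ e, |s e| ≤ 1) {x : (ι → Bool) → V → ℝ} (hx : ∀ b v, x b v ^ 2 ≤ 1)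
    {y : (ι → Bool) → W → ℝ} (hy : ∀ b w, y b w ^ 2 ≤ 1) {ε : ℝ} (hε : 0 ≤ ε)
    (hcorr : ∀ e, ε ≤ 𝔼 b : ι → Bool, bitSign (b (col e)) * s e * (x b (src e) * y b (tgt e))) :
    (ε * Fintype.card E) ^ 2 ≤ 112 * Fintype.card ι * Fintype.card V * Fintype.card W
      * (Real.log (Fintype.card V + Fintype.card W) + 1) := by
  refine le_trans ?_ (expect_bipartite_sum_sq_le hsrc htgt hs hx hy)
  gcongr
  rw [Finset.expect_sum_comm, mul_comm, ← nsmul_eq_mul]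
  exact Finset.card_nsmul_le_sum univ _ _ fun e _ => hcorr e

end TwoQueries

section MatchingFamily

variable {ι V E J : Type*}

/-- The colours `col e` split the tuples `p e : J → V` into matchings: within one colour class, no
vertex of `V` occurs twice, neither in two tuples nor in two positions of one tuple. -/
def IsMatchingFamily (col : E → ι) (p : E → J → V) : Prop :=
  Function.Injective fun q : E × J => (col q.1, p q.1 q.2)

variable {col : E → ι} {p : E → J → V}

lemma IsMatchingFamily.injective_apply (h : IsMatchingFamily col p) (a : J) :
    Function.Injective fun e => (col e, p e a) :=
  fun e e' hee => congrArg Prod.fst (@h (e, a) (e', a) hee)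

lemma IsMatchingFamily.injective_tuple (h : IsMatchingFamily col p) (e : E) :
    Function.Injective (p e) :=
  fun a a' haa => congrArg Prod.snd (@h (e, a) (e, a') (Prod.ext rfl haa))

lemma IsMatchingFamily.comp (h : IsMatchingFamily col p) {E' : Type*} {φ : E' → E}
    (hφ : Function.Injective φ) : IsMatchingFamily (col ∘ φ) (p ∘ φ) :=
  fun _ _ hqq => hφ.prodMap Function.injective_id (h hqq)

end MatchingFamily

section Markov

variable {Ω : Type*} [Fintype Ω]

lemma mul_card_filter_lt_le_sum {φ : Ω → ℝ} (hφ : ∀ ω, 0 ≤ φ ω) (d : ℝ) :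
    d * #{ω | d < φ ω} ≤ ∑ ω, φ ω := by
  calc d * #{ω | d < φ ω} ≤ ∑ ω with d < φ ω, φ ω := by
        rw [mul_comm, ← nsmul_eq_mul]
        exact Finset.card_nsmul_le_sum _ _ _ fun ω hω => (Finset.mem_filter.1 hω).2.le
    _ ≤ ∑ ω, φ ω :=
        Finset.sum_le_sum_of_subset_of_nonneg (Finset.filter_subset _ _) fun ω _ _ => hφ ω

lemma card_filter_lt_le_card_div_four [Nonempty Ω] {φ : Ω → ℝ} (hφ : ∀ ω, 0 ≤ φ ω) {d : ℝ}
    (hd : 0 < d) (h : 𝔼 ω, φ ω ≤ d / 4) : (#{ω | d < φ ω} : ℝ) ≤ Fintype.card Ω / 4 := by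
  have hΩ : (0 : ℝ) < Fintype.card Ω := by exact_mod_cast Fintype.card_pos
  rw [Fintype.expect_eq_sum_div_card, div_le_iff₀ hΩ] at h
  exact le_of_mul_le_mul_left
    ((mul_card_filter_lt_le_sum hφ d).trans (h.trans_eq (by ring))) hd

lemma card_div_two_le_card_filter_le_and_le [Nonempty Ω] {φ ψ : Ω → ℝ} (hφ : ∀ ω, 0 ≤ φ ω)
    (hψ : ∀ ω, 0 ≤ ψ ω) {d : ℝ} (hd : 0 < d) (hφd : 𝔼 ω, φ ω ≤ d / 4)
    (hψd : 𝔼 ω, ψ ω ≤ d / 4) :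
    (Fintype.card Ω : ℝ) / 2 ≤ #{ω | φ ω ≤ d ∧ ψ ω ≤ d} := by
  have hcover : (univ : Finset Ω) ⊆
      ({ω | φ ω ≤ d ∧ ψ ω ≤ d} : Finset Ω) ∪
        (({ω | d < φ ω} : Finset Ω) ∪ ({ω | d < ψ ω} : Finset Ω)) := fun ω _ => by
    simp only [mem_union, mem_filter, mem_univ, true_and]
    by_cases h : φ ω ≤ d <;> by_cases h' : ψ ω ≤ d <;> simp_all
  have hcard : (Fintype.card Ω : ℝ) ≤
      #{ω | φ ω ≤ d ∧ ψ ω ≤ d} + (#{ω | d < φ ω} + #{ω | d < ψ ω}) := by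
    exact_mod_cast (Finset.card_le_card hcover).trans ((Finset.card_union_le _ _).trans
      (Nat.add_le_add_left (Finset.card_union_le _ _) _))
  linarith [card_filter_lt_le_card_div_four hφ hd hφd, card_filter_lt_le_card_div_four hψ hd hψd]

end Markov

section HeavyEdges

variable {ι V W E : Type*} [Fintype ι] [DecidableEq ι] [Nonempty ι] [Fintype V] [Nonempty V]
  [Fintype W] [DecidableEq W] [Fintype E]

lemma mul_card_filter_lt_card_fiber_le (g : E → W) (d : ℝ) :
    d * #{w | d < (#{e | g e = w} : ℝ)} ≤ Fintype.card E := by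
  refine (mul_card_filter_lt_le_sum (fun w => Nat.cast_nonneg _) d).trans_eq ?_
  exact_mod_cast (Finset.card_eq_sum_card_fiberwise (s := univ) fun e _ => mem_univ (g e)).symm

lemma sq_mul_card_heavy_le {col : E → ι} {src : E → V} {tgt : E → W}
    (hsrc : Function.Injective fun e => (col e, src e))
    (htgt : Function.Injective fun e => (col e, tgt e))
    {s : E → ℝ} (hs : ∀ e, |s e| ≤ 1) {x : (ι → Bool) → V → ℝ} (hx : ∀ b v, x b v ^ 2 ≤ 1)
    {y : (ι → Bool) → W → ℝ} (hy : ∀ b w, y b w ^ 2 ≤ 1) {ε d : ℝ} (hε : 0 ≤ ε) (hd : 0 < d)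
    (hcorr : ∀ e, ε ≤ 𝔼 b : ι → Bool, bitSign (b (col e)) * s e * (x b (src e) * y b (tgt e))) :
    (ε * #{e | d < (#{e' | tgt e' = tgt e} : ℝ)}) ^ 2 ≤ 112 * Fintype.card ι ^ 2
      * Fintype.card V ^ 2 * (Real.log (Fintype.card V + Fintype.card W) + 1) / d := by
  have hV : (1 : ℝ) ≤ Fintype.card V := by exact_mod_cast Fintype.card_pos
  have hlog (w : ℝ) (hw : 0 ≤ w) : 0 ≤ Real.log (Fintype.card V + w) :=
    Real.log_nonneg (by linarith)
  -- At most `|ι| |V| / d` vertices of `W` are heavy, so the edges at them live on few vertices.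
  set Heavy : W → Prop := fun w => d < (#{e | tgt e = w} : ℝ)
  have hcardE : (Fintype.card E : ℝ) ≤ Fintype.card ι * Fintype.card V := by
    exact_mod_cast (Fintype.card_le_of_injective _ hsrc).trans_eq (Fintype.card_prod ι V)
  have hcardW : (Fintype.card {w // Heavy w} : ℝ) ≤ Fintype.card ι * Fintype.card V / d := by
    rw [le_div_iff₀' hd, Fintype.card_subtype]
    exact (mul_card_filter_lt_card_fiber_le tgt d).trans hcardE
  rw [← Fintype.card_subtype]
  rcases isEmpty_or_nonempty {w // Heavy w} with hW | hW
  · have : IsEmpty {e // Heavy (tgt e)} := ⟨fun e => hW.false ⟨_, e.2⟩⟩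
    have := hlog (Fintype.card W) (Nat.cast_nonneg _)
    simp only [Heavy] at *
    rw [Fintype.card_eq_zero, Nat.cast_zero, mul_zero, zero_pow two_ne_zero]
    positivity
  have hbound := sq_mul_card_le_of_two_queries (E := {e // Heavy (tgt e)}) (W := {w // Heavy w})
    (col := fun e => col e) (src := fun e => src e) (tgt := fun e => ⟨tgt e, e.2⟩)
    (hsrc.comp Subtype.val_injective) (fun e e' h => Subtype.ext (htgt (by simpa using h)))
    (fun e => hs e) hx (y := fun b w => y b w) (fun b w => hy b w) hε fun e => hcorr e
  have hW := hlog (Fintype.card {w // Heavy w}) (Nat.cast_nonneg _)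
  calc _ ≤ _ := hbound
    _ ≤ 112 * Fintype.card ι * Fintype.card V * (Fintype.card ι * Fintype.card V / d)
          * (Real.log (Fintype.card V + Fintype.card W) + 1) := by
        gcongr
        exact Fintype.card_subtype_le _
    _ = _ := by ring

end HeavyEdges

section Pruning

variable {ι F Z : Type*} [DecidableEq ι] [Fintype F] [DecidableEq Z]

/-- The number of half-edges of colour `i` at the vertex `z`, in the multigraph with edges
`src f — tgt f`. -/
def colorDegree (col : F → ι) (src tgt : F → Z) (i : ι) (z : Z) : ℕ :=
  #{f | col f = i ∧ src f = z} + #{f | col f = i ∧ tgt f = z}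

lemma sum_abs_le_of_colorDegree_le {col : F → ι} {src tgt : F → Z} {wt : F → ℝ} {β Δ : ℝ}
    (hΔ : 0 ≤ Δ) (hwt : ∀ f, |wt f| ≤ β)
    (hdeg : ∀ f, wt f ≠ 0 → (colorDegree col src tgt (col f) (src f) : ℝ) ≤ Δ ∧
      (colorDegree col src tgt (col f) (tgt f) : ℝ) ≤ Δ) (hβ : 0 ≤ β) (i : ι) (z : Z) :
    (∑ f with col f = i ∧ src f = z, |wt f|) + ∑ f with col f = i ∧ tgt f = z, |wt f| ≤ β * Δ := by
  by_cases hz : (colorDegree col src tgt i z : ℝ) ≤ Δ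
  · have hcount (S : Finset F) : ∑ f ∈ S, |wt f| ≤ β * #S := by
      rw [mul_comm, ← nsmul_eq_mul]
      exact Finset.sum_le_card_nsmul _ _ _ fun f _ => hwt f
    calc _ ≤ β * (#{f | col f = i ∧ src f = z} : ℝ) + β * (#{f | col f = i ∧ tgt f = z} : ℝ) :=
          add_le_add (hcount _) (hcount _)
      _ = β * (colorDegree col src tgt i z : ℝ) := by
          rw [colorDegree, Nat.cast_add, mul_add]
      _ ≤ β * Δ := by gcongr
  · rw [Finset.sum_eq_zero, Finset.sum_eq_zero, add_zero]
    · positivity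
    all_goals
      intro f hf
      obtain ⟨rfl, rfl⟩ := (Finset.mem_filter.1 hf).2
      by_contra h
      have := hdeg f (abs_ne_zero.1 h)
      tauto

variable [Fintype ι] [Nonempty ι] [Fintype Z] [Nonempty Z]

/- Every `θ` is represented by the edges `(θ, ω)`. By Markov's inequality half of them join
vertices of degree at most `Δ`; spreading the coefficient `c θ` evenly over these keeps all weighted
degrees at most `2 Δ / |Ω|`. -/
lemma expect_sum_sq_le_of_expect_colorDegree_le {Θ Ω : Type*} [Fintype Θ] [Fintype Ω] [Nonempty Ω]
    (col : Θ → ι) (src tgt : Θ × Ω → Z) {c : Θ → ℝ} (hc : ∀ θ, |c θ| ≤ 1) {Δ : ℝ} (hΔ : 0 < Δ)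
    (hsrc : ∀ θ, 𝔼 ω, (colorDegree (fun f => col f.1) src tgt (col θ) (src (θ, ω)) : ℝ) ≤ Δ / 4)
    (htgt : ∀ θ, 𝔼 ω, (colorDegree (fun f => col f.1) src tgt (col θ) (tgt (θ, ω)) : ℝ) ≤ Δ / 4)
    {v : (ι → Bool) → Z → ℝ} (hv : ∀ b z, v b z ^ 2 ≤ 1) {m : (ι → Bool) → Θ → ℝ}
    (hm : ∀ b θ ω, v b (src (θ, ω)) * v b (tgt (θ, ω)) = m b θ) :
    (𝔼 b : ι → Bool, ∑ θ, bitSign (b (col θ)) * c θ * m b θ) ^ 2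
      ≤ 28 * Fintype.card ι * Fintype.card Z ^ 2 * (2 / Fintype.card Ω * Δ) ^ 2
        * (Real.log (Fintype.card Z) + 1) := by
  have hΩ : (0 : ℝ) < Fintype.card Ω := by exact_mod_cast Fintype.card_pos
  set deg : ι → Z → ℕ := colorDegree (fun f => col f.1) src tgt
  set good : Θ → Finset Ω := fun θ =>
    {ω | (deg (col θ) (src (θ, ω)) : ℝ) ≤ Δ ∧ (deg (col θ) (tgt (θ, ω)) : ℝ) ≤ Δ}
  have hhalf (θ : Θ) : (Fintype.card Ω : ℝ) / 2 ≤ #(good θ) :=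
    card_div_two_le_card_filter_le_and_le (fun _ => Nat.cast_nonneg _)
      (fun _ => Nat.cast_nonneg _) hΔ (hsrc θ) (htgt θ)
  have hgood0 (θ : Θ) : (0 : ℝ) < #(good θ) := (half_pos hΩ).trans_le (hhalf θ)
  set wt : Θ × Ω → ℝ := fun f => if f.2 ∈ good f.1 then c f.1 / #(good f.1) else 0 with hwt
  have hwt_le (f : Θ × Ω) : |wt f| ≤ 2 / Fintype.card Ω := by
    simp only [hwt]
    split_ifs
    · rw [abs_div, Nat.abs_cast, div_le_div_iff₀ (hgood0 _) hΩ]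
      nlinarith [hc f.1, hhalf f.1]
    · rw [abs_zero]; positivity
  have hwt_deg (f : Θ × Ω) (hf : wt f ≠ 0) :
      (deg (col f.1) (src f) : ℝ) ≤ Δ ∧ (deg (col f.1) (tgt f) : ℝ) ≤ Δ := by
    have hmem : f.2 ∈ good f.1 := by_contra fun h => hf (if_neg h)
    exact (Finset.mem_filter.1 hmem).2
  have hsum (b : ι → Bool) : ∑ f : Θ × Ω, bitSign (b (col f.1)) * wt f
      * (v b (src f) * v b (tgt f)) = ∑ θ, bitSign (b (col θ)) * c θ * m b θ := by
    rw [Fintype.sum_prod_type]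
    refine Finset.sum_congr rfl fun θ _ => ?_
    simp only [hm, ← Finset.sum_mul, ← Finset.mul_sum, hwt]
    rw [Finset.sum_ite_mem, Finset.univ_inter, Finset.sum_const, nsmul_eq_mul,
      mul_div_cancel₀ _ (hgood0 θ).ne']
  simp_rw [← hsum]
  exact expect_edge_sum_sq_le _ src tgt wt
    (sum_abs_le_of_colorDegree_le hΔ.le hwt_le hwt_deg (by positivity)) fun b =>
    (Finset.sum_le_sum fun z _ => hv b z).trans_eq (by simp)

end Pruning

section Kikuchi

section Expect

variable {A B V J : Type*} [Fintype A] [Fintype B] [Fintype V] [Fintype J] [DecidableEq J]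

lemma expect_fst [Nonempty B] (φ : A → ℝ) : 𝔼 z : A × B, φ z.1 = 𝔼 a, φ a := by
  rw [← Finset.univ_product_univ, Finset.expect_product]
  simp only [Finset.expect_const univ_nonempty]

lemma expect_snd [Nonempty A] (φ : B → ℝ) : 𝔼 z : A × B, φ z.2 = 𝔼 b, φ b := by
  rw [← Finset.univ_product_univ, Finset.expect_product]
  exact Finset.expect_const univ_nonempty (𝔼 b, φ b)

lemma expect_pi_apply [Nonempty V] (j : J) (φ : V → ℝ) : 𝔼 z : J → V, φ (z j) = 𝔼 v, φ v :=
  (Fintype.expect_equiv (Equiv.funSplitAt j V) _ (fun z => φ z.1) fun _ => rfl).trans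
    (expect_fst φ)

end Expect

section Update

variable {V J : Type*} [Fintype J] [DecidableEq J]

lemma sum_update_le {φ : V → ℝ} (hφ : ∀ v, 0 ≤ φ v) (z : J → V) (t : J) (a : V) :
    ∑ j, φ (Function.update z t a j) ≤ φ a + ∑ j, φ (z j) := by
  calc ∑ j, φ (Function.update z t a j) ≤ ∑ j, ((if j = t then φ a else 0) + φ (z j)) := by
        refine Finset.sum_le_sum fun j _ => ?_
        by_cases hj : j = t
        · subst hj; simp [hφ]
        · simp [hj]
    _ = φ a + ∑ j, φ (z j) := by
        rw [Finset.sum_add_distrib, Finset.sum_ite_eq' univ t, if_pos (mem_univ t)]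

lemma prod_update_mul_prod_update {x : V → ℝ} (hx : ∀ v, x v ^ 2 = 1) (z : J → V) (t : J)
    (a a' : V) :
    (∏ j, x (Function.update z t a j)) * ∏ j, x (Function.update z t a' j) = x a * x a' := by
  rw [← Finset.prod_mul_distrib, Finset.prod_eq_single t]
  · simp
  · intro j _ hj
    simp [Function.update_of_ne hj, ← sq, hx]
  · simp

lemma card_filter_update_eq [Fintype V] [DecidableEq V] (t : J) (a : V) (y : J → V) :
    #{z : J → V | Function.update z t a = y} = if y t = a then Fintype.card V else 0 := by
  split_ifs with h
  · subst h
    rw [← Finset.card_univ, ← Finset.card_map ⟨_, Function.update_injective y t⟩]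
    congr 1
    ext z
    suffices Function.update z t (y t) = y ↔ ∃ v, Function.update y t v = z by simpa
    refine ⟨fun h => ⟨z t, ?_⟩, ?_⟩
    · rw [← h]; simp
    · rintro ⟨v, rfl⟩; simp
  · refine Finset.card_eq_zero.2 (Finset.filter_eq_empty_iff.2 fun z _ hz => h ?_)
    rw [← hz, Function.update_self]

end Update

/-- Vertices of the Kikuchi graph: pairs of tuples of vertices indexed by `J`, where the number of
elements of `J` is the level. Tuples with repetitions replace the sets of the usual construction. -/
abbrev KikuchiVertex (V J : Type*) := (J → V) × (J → V)

/-- Labels of the parallel edges of the Kikuchi graph representing one constraint: the two slots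
which are overwritten, and the tuples outside these slots. -/
abbrev KikuchiLabel (V J : Type*) := (J × J) × KikuchiVertex V J

variable {V J : Type*} [Fintype J]

/-- The monomial in the variables `x` attached to a Kikuchi vertex. -/
def kikuchiMonomial (x : V → ℝ) (z : KikuchiVertex V J) : ℝ :=
  (∏ j, x (z.1 j)) * ∏ j, x (z.2 j)

/-- The total weight of the pairs of entries of a Kikuchi vertex; when `g` is the degree in a graph
on `V × V`, this governs the degree in its Kikuchi graph. -/
def kikuchiWeight (g : V × V → ℝ) (y : KikuchiVertex V J) : ℝ :=
  ∑ t : J × J, g (y.1 t.1, y.2 t.2)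

lemma kikuchiMonomial_sq {x : V → ℝ} (hx : ∀ v, x v ^ 2 = 1) (z : KikuchiVertex V J) :
    kikuchiMonomial x z ^ 2 = 1 := by
  simp [kikuchiMonomial, mul_pow, ← Finset.prod_pow, hx]

variable [DecidableEq J]

/-- The endpoint of a Kikuchi edge at which the overwritten slots hold the pair `u`. -/
def overwrite (u : V × V) (ω : KikuchiLabel V J) : KikuchiVertex V J :=
  (Function.update ω.2.1 ω.1.1 u.1, Function.update ω.2.2 ω.1.2 u.2)

lemma kikuchiMonomial_overwrite_mul {x : V → ℝ} (hx : ∀ v, x v ^ 2 = 1) (u u' : V × V)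
    (ω : KikuchiLabel V J) :
    kikuchiMonomial x (overwrite u ω) * kikuchiMonomial x (overwrite u' ω)
      = x u.1 * x u'.1 * (x u.2 * x u'.2) := by
  unfold kikuchiMonomial overwrite
  rw [← prod_update_mul_prod_update hx ω.2.1 ω.1.1 u.1,
    ← prod_update_mul_prod_update hx ω.2.2 ω.1.2 u.2]
  ring

lemma kikuchiWeight_overwrite_le {g : V × V → ℝ} (hg : ∀ u, 0 ≤ g u) (u : V × V)
    (ω : KikuchiLabel V J) :
    kikuchiWeight g (overwrite u ω) ≤
      g u + ∑ t, g (u.1, ω.2.2 t) + ∑ t, g (ω.2.1 t, u.2) + kikuchiWeight g ω.2 := by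
  simp only [kikuchiWeight, overwrite, Fintype.sum_prod_type]
  calc _ ≤ ∑ t, (g (Function.update ω.2.1 ω.1.1 u.1 t, u.2)
          + ∑ t', g (Function.update ω.2.1 ω.1.1 u.1 t, ω.2.2 t')) :=
        Finset.sum_le_sum fun t _ => sum_update_le (fun w => hg (_, w)) _ _ _
    _ ≤ (g (u.1, u.2) + ∑ t, g (ω.2.1 t, u.2))
          + (∑ t', g (u.1, ω.2.2 t') + ∑ t, ∑ t', g (ω.2.1 t, ω.2.2 t')) := by
        rw [Finset.sum_add_distrib]
        exact add_le_add (sum_update_le (fun v => hg (v, _)) _ _ _)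
          (sum_update_le (φ := fun v => ∑ t', g (v, ω.2.2 t'))
            (fun v => Finset.sum_nonneg fun _ _ => hg _) _ _ _)
    _ = _ := by ring

variable [Fintype V]

lemma card_filter_overwrite_eq [DecidableEq V] (u : V × V) (y : KikuchiVertex V J) :
    #{ω | overwrite u ω = y}
      = Fintype.card V ^ 2 * #{t : J × J | u = (y.1 t.1, y.2 t.2)} := by
  rw [Finset.card_filter, Fintype.sum_prod_type, Finset.card_filter, Finset.mul_sum]
  refine Finset.sum_congr rfl fun t _ => ?_
  rw [← Finset.card_filter]
  calc #{z : KikuchiVertex V J | overwrite u (t, z) = y}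
      = #(({z | Function.update z t.1 u.1 = y.1} : Finset (J → V)) ×ˢ
          ({z | Function.update z t.2 u.2 = y.2} : Finset (J → V))) := by
        congr 1; ext z; simp [overwrite, Prod.ext_iff]
    _ = _ := by
        rw [Finset.card_product, card_filter_update_eq, card_filter_update_eq]
        by_cases h₁ : u.1 = y.1 t.1 <;> by_cases h₂ : u.2 = y.2 t.2 <;>
          simp [Prod.ext_iff, h₁, h₂, Ne.symm, sq]

lemma cast_colorDegree_kikuchi {ι Θ : Type*} [DecidableEq ι] [Fintype Θ] [DecidableEq V]
    (col : Θ → ι) (src tgt : Θ → V × V) (i : ι) (y : KikuchiVertex V J) :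
    (colorDegree (fun f : Θ × KikuchiLabel V J => col f.1) (fun f => overwrite (src f.1) f.2)
      (fun f => overwrite (tgt f.1) f.2) i y : ℝ)
      = Fintype.card V ^ 2 * kikuchiWeight (fun u => (colorDegree col src tgt i u : ℝ)) y := by
  have hcount (s : Θ → V × V) :
      #{f : Θ × KikuchiLabel V J | col f.1 = i ∧ overwrite (s f.1) f.2 = y}
        = Fintype.card V ^ 2 * ∑ t : J × J, #{θ | col θ = i ∧ s θ = (y.1 t.1, y.2 t.2)} := by
    simp only [Finset.card_filter, Fintype.sum_prod_type (α₁ := Θ), ite_and]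
    rw [Finset.sum_comm (s := (univ : Finset (J × J))), Finset.mul_sum]
    refine Finset.sum_congr rfl fun θ _ => ?_
    split_ifs
    · rw [← Finset.card_filter, ← Finset.card_filter, card_filter_overwrite_eq]
    · simp
  rw [kikuchiWeight, colorDegree, hcount, hcount]
  simp only [colorDegree]
  push_cast
  rw [← mul_add, Finset.sum_add_distrib]

variable [Nonempty V]

lemma expect_kikuchiWeight_le {g : V × V → ℝ} {κ : ℝ} (hrow : ∀ v, ∑ w, g (v, w) ≤ κ) :
    𝔼 z : KikuchiVertex V J, kikuchiWeight g z ≤ Fintype.card J ^ 2 * (κ / Fintype.card V) := by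
  have hentry (t : J × J) :
      𝔼 z : KikuchiVertex V J, g (z.1 t.1, z.2 t.2) ≤ κ / Fintype.card V := by
    rw [← Finset.univ_product_univ, Finset.expect_product]
    refine Finset.expect_le univ_nonempty fun z _ => ?_
    rw [expect_pi_apply t.2 fun w => g (z t.1, w), Fintype.expect_eq_sum_div_card]
    gcongr
    exact hrow _
  calc 𝔼 z : KikuchiVertex V J, kikuchiWeight g z
      ≤ ∑ _t : J × J, κ / Fintype.card V := by
        simp only [kikuchiWeight, Finset.expect_sum_comm]
        exact Finset.sum_le_sum fun t _ => hentry t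
    _ = _ := by simp [sq]

variable [Nonempty J]

lemma expect_kikuchiWeight_overwrite_le {g : V × V → ℝ} (hg : ∀ u, 0 ≤ g u) {κ d : ℝ}
    (hd : ∀ u, g u ≤ d) (hrow : ∀ v, ∑ w, g (v, w) ≤ κ) (hcol : ∀ w, ∑ v, g (v, w) ≤ κ)
    (hκ : Fintype.card V * d ≤ κ * Fintype.card J ^ 2) (u : V × V) :
    𝔼 ω : KikuchiLabel V J, kikuchiWeight g (overwrite u ω)
      ≤ 4 * Fintype.card J ^ 2 * κ / Fintype.card V := by
  have hn : (0 : ℝ) < Fintype.card V := by exact_mod_cast Fintype.card_pos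
  have hl : (1 : ℝ) ≤ Fintype.card J := by exact_mod_cast Fintype.card_pos
  have hκ0 : 0 ≤ κ := (Finset.sum_nonneg fun w _ => hg _).trans (hrow (Classical.arbitrary V))
  set n : ℝ := (Fintype.card V : ℝ)
  set l : ℝ := (Fintype.card J : ℝ)
  have hconst : g u ≤ l ^ 2 * (κ / n) := by
    refine (hd u).trans ?_
    rw [← mul_div_assoc, le_div_iff₀ hn]
    linarith
  have hrow' (v : V) : 𝔼 w, g (v, w) ≤ κ / n := by
    rw [Fintype.expect_eq_sum_div_card]
    gcongr
    exact hrow v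
  have hcol' (w : V) : 𝔼 v, g (v, w) ≤ κ / n := by
    rw [Fintype.expect_eq_sum_div_card]
    gcongr
    exact hcol w
  have hsnd (t : J) : 𝔼 ω : KikuchiLabel V J, g (u.1, ω.2.2 t) ≤ κ / n := by
    rw [expect_snd fun z : KikuchiVertex V J => g (u.1, z.2 t),
      expect_snd fun z : J → V => g (u.1, z t), expect_pi_apply t fun w => g (u.1, w)]
    exact hrow' _
  have hfst (t : J) : 𝔼 ω : KikuchiLabel V J, g (ω.2.1 t, u.2) ≤ κ / n := by
    rw [expect_snd fun z : KikuchiVertex V J => g (z.1 t, u.2),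
      expect_fst fun z : J → V => g (z t, u.2), expect_pi_apply t fun v => g (v, u.2)]
    exact hcol' _
  have hboth : 𝔼 ω : KikuchiLabel V J, kikuchiWeight g ω.2 ≤ l ^ 2 * (κ / n) := by
    rw [expect_snd]
    exact expect_kikuchiWeight_le hrow
  calc 𝔼 ω : KikuchiLabel V J, kikuchiWeight g (overwrite u ω)
      ≤ 𝔼 ω : KikuchiLabel V J, (g u + ∑ t, g (u.1, ω.2.2 t) + ∑ t, g (ω.2.1 t, u.2)
          + kikuchiWeight g ω.2) :=
        Finset.expect_le_expect fun ω _ => kikuchiWeight_overwrite_le hg u ω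
    _ ≤ l ^ 2 * (κ / n) + ∑ _t : J, κ / n + ∑ _t : J, κ / n + l ^ 2 * (κ / n) := by
        simp only [Finset.expect_add_distrib, Finset.expect_sum_comm]
        rw [Finset.expect_const univ_nonempty]
        gcongr <;> apply_assumption
    _ ≤ 4 * l ^ 2 * κ / n := by
        have hll : l * (κ / n) ≤ l ^ 2 * (κ / n) := by
          gcongr; nlinarith
        simp only [Finset.sum_const, card_univ, nsmul_eq_mul]
        linarith [show 4 * l ^ 2 * κ / n = 4 * (l ^ 2 * (κ / n)) by ring]

end Kikuchi

section KikuchiBound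

variable {ι Θ V J : Type*} [Fintype ι] [DecidableEq ι] [Nonempty ι] [Fintype Θ] [Fintype V]
  [DecidableEq V] [Nonempty V] [Fintype J] [Nonempty J]

variable (J) in
lemma expect_sum_sq_le_of_colorDegree_le (col : Θ → ι) (src tgt : Θ → V × V) {c : Θ → ℝ}
    (hc : ∀ θ, |c θ| ≤ 1) {κ d : ℝ} (hκ : 0 < κ)
    (hdeg : ∀ i u, (colorDegree col src tgt i u : ℝ) ≤ d)
    (hrow : ∀ i v, ∑ w, (colorDegree col src tgt i (v, w) : ℝ) ≤ κ)
    (hcol : ∀ i w, ∑ v, (colorDegree col src tgt i (v, w) : ℝ) ≤ κ)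
    (hd : Fintype.card V * d ≤ κ * Fintype.card J ^ 2) {x : (ι → Bool) → V → ℝ}
    (hx : ∀ b v, x b v ^ 2 = 1) :
    (𝔼 b : ι → Bool, ∑ θ, bitSign (b (col θ)) * c θ *
        (x b (src θ).1 * x b (tgt θ).1 * (x b (src θ).2 * x b (tgt θ).2))) ^ 2
      ≤ 28672 * Fintype.card ι * κ ^ 2 * Fintype.card V ^ 2
        * (2 * Fintype.card J * Real.log (Fintype.card V) + 1) := by
  have hlog : Real.log (Fintype.card (KikuchiVertex V J))
      = 2 * Fintype.card J * Real.log (Fintype.card V) := by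
    rw [Fintype.card_prod, Fintype.card_fun, ← pow_add, Nat.cast_pow, Real.log_pow]
    push_cast
    ring
  set Δ : ℝ := 16 * Fintype.card V * Fintype.card J ^ 2 * κ
  have hexpect (i : ι) (u : V × V) : 𝔼 ω : KikuchiLabel V J,
      (colorDegree (fun f : Θ × KikuchiLabel V J => col f.1) (fun f => overwrite (src f.1) f.2)
        (fun f => overwrite (tgt f.1) f.2) i (overwrite u ω) : ℝ) ≤ Δ / 4 := by
    simp only [cast_colorDegree_kikuchi, ← Finset.mul_expect]
    calc _ ≤ (Fintype.card V : ℝ) ^ 2 * (4 * Fintype.card J ^ 2 * κ / Fintype.card V) := by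
          gcongr
          exact expect_kikuchiWeight_overwrite_le (fun u => Nat.cast_nonneg _) (hdeg i) (hrow i)
            (hcol i) hd u
      _ = Δ / 4 := by simp only [Δ]; field_simp; ring
  have hΔ : 0 < Δ := by positivity
  have hmain := expect_sum_sq_le_of_expect_colorDegree_le col
    (fun f : Θ × KikuchiLabel V J => overwrite (src f.1) f.2) (fun f => overwrite (tgt f.1) f.2)
    hc hΔ (fun θ => hexpect (col θ) (src θ)) (fun θ => hexpect (col θ) (tgt θ))
    (v := fun b => kikuchiMonomial (x b)) (fun b z => (kikuchiMonomial_sq (hx b) z).le)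
    (m := fun b θ => x b (src θ).1 * x b (tgt θ).1 * (x b (src θ).2 * x b (tgt θ).2))
    fun b θ ω => kikuchiMonomial_overwrite_mul (hx b) (src θ) (tgt θ) ω
  refine hmain.trans_eq ?_
  rw [hlog, Fintype.card_prod (J × J), Fintype.card_prod J]
  push_cast
  simp only [Δ]
  field_simp
  ring

end KikuchiBound

section LinkedPairs

variable {ι V E : Type*} {col : E → ι} {p : E → Fin 3 → V}

/-- The pairs of triples with the same first vertex. -/
abbrev LinkedPair (p : E → Fin 3 → V) := {q : E × E // p q.1 0 = p q.2 0}

/-- The vertices at position `a` of the two triples of a linked pair. -/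
def linkedAt (p : E → Fin 3 → V) (a : Fin 3) (θ : LinkedPair p) : V × V :=
  (p θ.1.1 a, p θ.1.2 a)

lemma LinkedPair.eq_of_snd_eq (h : IsMatchingFamily col p) {θ θ' : LinkedPair p}
    (hcol : col θ.1.1 = col θ'.1.1) (hsnd : θ.1.2 = θ'.1.2) : θ = θ' := by
  refine Subtype.ext (Prod.ext (h.injective_apply 0 (Prod.ext hcol ?_)) hsnd)
  simp only [θ.2, θ'.2, hsnd]

lemma LinkedPair.eq_of_fst_eq (h : IsMatchingFamily col p) {θ θ' : LinkedPair p}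
    (hcol : col θ.1.2 = col θ'.1.2) (hfst : θ.1.1 = θ'.1.1) : θ = θ' := by
  refine Subtype.ext (Prod.ext hfst (h.injective_apply 0 (Prod.ext hcol ?_)))
  simp only [← θ.2, ← θ'.2, hfst]

variable [DecidableEq ι] [DecidableEq V] [Fintype E]

lemma card_filter_linkedAt_le (h : IsMatchingFamily col p) (a : Fin 3) {d : ℝ} (hd : 0 ≤ d)
    (hcodeg : ∀ u w, (#{e | p e 0 = u ∧ p e a = w} : ℝ) ≤ d) (i : ι) (u : V × V) :
    (#{θ : LinkedPair p | col θ.1.1 = i ∧ linkedAt p a θ = u} : ℝ) ≤ d := by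
  set S : Finset (LinkedPair p) := {θ | col θ.1.1 = i ∧ linkedAt p a θ = u}
  rcases S.eq_empty_or_nonempty with hS | ⟨θ₀, hθ₀⟩
  · rw [hS]; simpa using hd
  refine le_trans ?_ (hcodeg (p θ₀.1.1 0) u.2)
  have hS (θ) (hθ : θ ∈ S) : col θ.1.1 = i ∧ p θ.1.1 a = u.1 ∧ p θ.1.2 a = u.2 := by
    simpa [S, linkedAt, Prod.ext_iff] using hθ
  have hfst (θ) (hθ : θ ∈ S) : θ.1.1 = θ₀.1.1 := h.injective_apply a <| Prod.ext
    ((hS θ hθ).1.trans (hS θ₀ hθ₀).1.symm) ((hS θ hθ).2.1.trans (hS θ₀ hθ₀).2.1.symm)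
  norm_cast
  refine Finset.card_le_card_of_injOn (fun θ => θ.1.2) (fun θ hθ => ?_) fun θ hθ θ' hθ' hsnd =>
    LinkedPair.eq_of_snd_eq h ((hS θ hθ).1.trans (hS θ' hθ').1.symm) hsnd
  simp [← hfst θ hθ, θ.2, (hS θ hθ).2.2]

variable [Fintype ι] [Fintype V]

lemma sum_snd_card_filter_linkedAt_le (h : IsMatchingFamily col p) (a : Fin 3) (i : ι) (v : V) :
    ∑ w, #{θ : LinkedPair p | col θ.1.1 = i ∧ linkedAt p a θ = (v, w)} ≤ Fintype.card ι := by
  set S : Finset (LinkedPair p) := {θ | col θ.1.1 = i ∧ p θ.1.1 a = v} with hS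
  have hfib : #S = ∑ w, #{θ : LinkedPair p | col θ.1.1 = i ∧ linkedAt p a θ = (v, w)} := by
    rw [Finset.card_eq_sum_card_fiberwise (f := fun θ => p θ.1.2 a) (t := univ) (by simp)]
    simp only [hS, Finset.filter_filter, linkedAt, Prod.mk.injEq, and_assoc]
  rw [← hfib, ← Finset.card_univ (α := ι)]
  refine Finset.card_le_card_of_injOn (fun θ => col θ.1.2) (by simp) fun θ hθ θ' hθ' hcol => ?_
  simp only [hS, coe_filter, mem_univ, true_and, Set.mem_ofPred_eq] at hθ hθ'
  exact LinkedPair.eq_of_fst_eq h hcol <| h.injective_apply a <|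
    Prod.ext (hθ.1.trans hθ'.1.symm) (hθ.2.trans hθ'.2.symm)

lemma sum_fst_card_filter_linkedAt_le (h : IsMatchingFamily col p) (a : Fin 3) (i : ι) (w : V) :
    ∑ v, #{θ : LinkedPair p | col θ.1.1 = i ∧ linkedAt p a θ = (v, w)} ≤ Fintype.card ι := by
  set S : Finset (LinkedPair p) := {θ | col θ.1.1 = i ∧ p θ.1.2 a = w} with hS
  have hfib : #S = ∑ v, #{θ : LinkedPair p | col θ.1.1 = i ∧ linkedAt p a θ = (v, w)} := by
    rw [Finset.card_eq_sum_card_fiberwise (f := fun θ => p θ.1.1 a) (t := univ) (by simp)]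
    simp only [hS, Finset.filter_filter, linkedAt, Prod.mk.injEq, ← and_assoc,
      and_right_comm]
  rw [← hfib, ← Finset.card_univ (α := ι)]
  refine Finset.card_le_card_of_injOn (fun θ => col θ.1.2) (by simp) fun θ hθ θ' hθ' hcol => ?_
  simp only [hS, coe_filter, mem_univ, true_and, Set.mem_ofPred_eq] at hθ hθ'
  exact LinkedPair.eq_of_snd_eq h (hθ.1.trans hθ'.1.symm) <| h.injective_apply a <|
    Prod.ext hcol (hθ.2.trans hθ'.2.symm)

variable [Nonempty ι]

lemma expect_sum_linkedPair_sq_le (h : IsMatchingFamily col p) {d : ℝ} (hd : 0 ≤ d)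
    (hcodeg : ∀ a ≠ 0, ∀ u w, (#{e | p e 0 = u ∧ p e a = w} : ℝ) ≤ d) {J : Type*} [Fintype J]
    [Nonempty J] (hJ : Fintype.card V * d ≤ Fintype.card ι * Fintype.card J ^ 2)
    (hV : 2 ≤ Fintype.card V) {c : LinkedPair p → ℝ} (hc : ∀ θ, |c θ| ≤ 1)
    {x : (ι → Bool) → V → ℝ} (hx : ∀ b v, x b v ^ 2 = 1) :
    (𝔼 b : ι → Bool, ∑ θ : LinkedPair p, bitSign (b (col θ.1.1)) * c θ *
        (x b (p θ.1.1 1) * x b (p θ.1.1 2) * (x b (p θ.1.2 1) * x b (p θ.1.2 2)))) ^ 2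
      ≤ 458752 * (Fintype.card ι : ℝ) ^ 3 * Fintype.card V ^ 2
        * (Fintype.card J * Real.log (Fintype.card V)) := by
  have : Nonempty V := Fintype.card_pos_iff.1 (by lia)
  have hl : (1 : ℝ) ≤ Fintype.card J := by exact_mod_cast Fintype.card_pos
  have hlog : 1 / 2 ≤ Real.log (Fintype.card V) := by
    have : (2 : ℝ) ≤ Fintype.card V := by exact_mod_cast hV
    linarith [Real.log_le_log (by norm_num) this, Real.log_two_gt_d9]
  have hbound := expect_sum_sq_le_of_colorDegree_le J (fun θ : LinkedPair p => col θ.1.1)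
    (linkedAt p 1) (linkedAt p 2) hc (κ := 2 * Fintype.card ι) (d := 2 * d) (by positivity)
    (fun i u => ?_) (fun i v => ?_) (fun i w => ?_) (by linarith) hx
  · calc _ ≤ _ := hbound
      _ ≤ 28672 * Fintype.card ι * (2 * Fintype.card ι) ^ 2 * Fintype.card V ^ 2
            * (4 * (Fintype.card J * Real.log (Fintype.card V))) := by
          gcongr
          nlinarith
      _ = _ := by ring
  · rw [colorDegree, Nat.cast_add, two_mul]
    exact add_le_add (card_filter_linkedAt_le h 1 hd (hcodeg 1 (by decide)) i u)
      (card_filter_linkedAt_le h 2 hd (hcodeg 2 (by decide)) i u)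
  · norm_cast
    simp only [colorDegree]
    rw [Finset.sum_add_distrib, two_mul]
    exact add_le_add (sum_snd_card_filter_linkedAt_le h 1 i v)
      (sum_snd_card_filter_linkedAt_le h 2 i v)
  · norm_cast
    simp only [colorDegree]
    rw [Finset.sum_add_distrib, two_mul]
    exact add_le_add (sum_fst_card_filter_linkedAt_le h 1 i w)
      (sum_fst_card_filter_linkedAt_le h 2 i w)

end LinkedPairs

section Decoupling

variable {ι : Type*} [Fintype ι] [DecidableEq ι]

lemma expect_bitSign_mul_eq_zero (i : ι) {G : (ι → Bool) → ℝ}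
    (hG : ∀ L t, G (Function.update L i t) = G L) : 𝔼 L : ι → Bool, bitSign (L i) * G L = 0 := by
  have hflip : Function.Involutive fun L : ι → Bool => Function.update L i (!L i) := fun L => by
    simp
  have h := Fintype.expect_equiv (hflip.toPerm _) (fun L => bitSign (L i) * G L)
    (fun L => -(bitSign (L i) * G L)) fun L => by
      simp only [Function.Involutive.coe_toPerm, hG, Function.update_self]
      cases L i <;> simp [bitSign]
  rw [Finset.expect_neg_distrib] at h
  linarith

lemma expect_one_add_bitSign_mul_one_sub_bitSign (i j : ι) :
    𝔼 L : ι → Bool, (1 + bitSign (L i)) * (1 - bitSign (L j)) = if i ≠ j then 1 else 0 := by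
  split_ifs with h
  · have hi := expect_bitSign_mul_eq_zero i (G := fun _ => 1) fun _ _ => rfl
    have hj := expect_bitSign_mul_eq_zero j (G := fun _ => 1) fun _ _ => rfl
    have hij := expect_bitSign_mul_eq_zero i (G := fun L => bitSign (L j)) fun L t => by
      rw [Function.update_of_ne h.symm]
    simp only [mul_one] at hi hj
    calc _ = 𝔼 L : ι → Bool, (1 + bitSign (L i) - bitSign (L j) - bitSign (L i) * bitSign (L j)) :=
          Finset.expect_congr rfl fun L _ => by ring
      _ = 1 := by
        rw [Finset.expect_sub_distrib, Finset.expect_sub_distrib, Finset.expect_add_distrib,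
          hi, hj, hij, Finset.expect_const univ_nonempty]
        ring
  · obtain rfl := not_not.1 h
    refine Finset.expect_eq_zero fun L _ => ?_
    linarith [bitSign_mul_self (L i)]

/-- The bit string which agrees with `b'` where `L` is false and with `b` elsewhere; it is used to
rerandomise half of the bits. -/
def mixBits (L b' b : ι → Bool) : ι → Bool := fun i => if L i then b i else b' i

lemma expect_mixBits (L : ι → Bool) (F : (ι → Bool) → ℝ) :
    𝔼 b, F b = 𝔼 b, 𝔼 b', F (mixBits L b' b) := by
  have hswap : Function.Involutive fun q : (ι → Bool) × (ι → Bool) =>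
      (mixBits L q.1 q.2, mixBits L q.2 q.1) := fun q => by
    refine Prod.ext (funext fun i => ?_) (funext fun i => ?_) <;>
      simp only [mixBits] <;> split_ifs <;> rfl
  calc 𝔼 b, F b = 𝔼 q : (ι → Bool) × (ι → Bool), F q.1 := (expect_fst F).symm
    _ = 𝔼 q : (ι → Bool) × (ι → Bool), F (mixBits L q.1 q.2) :=
        (Fintype.expect_equiv (hswap.toPerm _) _ _ fun _ => rfl).symm
    _ = 𝔼 b, 𝔼 b', F (mixBits L b' b) := by
        rw [← Finset.univ_product_univ,
          Finset.expect_product' univ univ fun b' b => F (mixBits L b' b), Finset.expect_comm]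

/- A random cut `L` separates two distinct colours in a given direction with probability `1 / 4`,
and resampling the bits on one side of a fixed cut does not change the distribution of `b`. -/
lemma expect_sum_filter_ne_le {Θ : Type*} [Fintype Θ] (c₁ c₂ : Θ → ι)
    (M : (ι → Bool) → Θ → ℝ) {K : ℝ}
    (hK : ∀ L b : ι → Bool, 𝔼 b' : ι → Bool,
      ∑ θ with L (c₁ θ) = false ∧ L (c₂ θ) = true, M (mixBits L b' b) θ ≤ K) :
    𝔼 b : ι → Bool, ∑ θ with c₁ θ ≠ c₂ θ, M b θ ≤ 4 * K := by
  have hcut (L : ι → Bool) (i j : ι) : (1 + bitSign (L i)) * (1 - bitSign (L j))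
      = if L i = false ∧ L j = true then 4 else 0 := by
    cases L i <;> cases L j <;> norm_num [bitSign]
  have hdecouple (b : ι → Bool) : ∑ θ with c₁ θ ≠ c₂ θ, M b θ = 𝔼 L : ι → Bool,
      4 * ∑ θ with L (c₁ θ) = false ∧ L (c₂ θ) = true, M b θ := by
    simp only [Finset.sum_filter, Finset.mul_sum]
    rw [Finset.expect_sum_comm]
    refine Finset.sum_congr rfl fun θ _ => ?_
    have h := expect_one_add_bitSign_mul_one_sub_bitSign (c₁ θ) (c₂ θ)
    simp only [hcut] at h
    calc (if c₁ θ ≠ c₂ θ then M b θ else 0) = (if c₁ θ ≠ c₂ θ then 1 else 0) * M b θ := by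
          rw [ite_mul, one_mul, zero_mul]
      _ = _ := by
          rw [← h, Finset.expect_mul]
          refine Finset.expect_congr rfl fun L _ => ?_
          split_ifs <;> ring
  simp_rw [hdecouple]
  rw [Finset.expect_comm]
  refine Finset.expect_le univ_nonempty fun L _ => ?_
  rw [expect_mixBits L]
  refine Finset.expect_le univ_nonempty fun b _ => ?_
  rw [← Finset.mul_expect]
  exact mul_le_mul_of_nonneg_left (hK L b) (by norm_num)

end Decoupling

section LightTriples

variable {ι V E : Type*} [Fintype V] [Fintype E] [DecidableEq V] {col : E → ι} {p : E → Fin 3 → V}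

lemma sum_sq_sum_fiber_eq_sum_linkedPair (p : E → Fin 3 → V) (m : E → ℝ) :
    ∑ u, (∑ e with p e 0 = u, m e) ^ 2 = ∑ θ : LinkedPair p, m θ.1.1 * m θ.1.2 := by
  calc ∑ u, (∑ e with p e 0 = u, m e) ^ 2
      = ∑ u, ∑ q : E × E with p q.1 0 = u ∧ p q.2 0 = u, m q.1 * m q.2 := by
        refine Finset.sum_congr rfl fun u _ => ?_
        rw [sq, Finset.sum_mul_sum, ← Finset.sum_product', ← Finset.univ_product_univ,
          Finset.filter_product (fun e => p e 0 = u) fun e => p e 0 = u]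
    _ = ∑ q : E × E with p q.1 0 = p q.2 0, m q.1 * m q.2 := by
        simp only [Finset.sum_filter]
        rw [Finset.sum_comm]
        refine Finset.sum_congr rfl fun q _ => ?_
        simp only [ite_and, Finset.sum_ite_eq, mem_univ, if_true]
        exact if_congr eq_comm rfl rfl
    _ = ∑ θ : LinkedPair p, m θ.1.1 * m θ.1.2 :=
        Finset.sum_subtype _ (by simp) fun q : E × E => m q.1 * m q.2

variable [DecidableEq ι]

lemma sum_sq_sum_fiber_le (h : IsMatchingFamily col p) {m : E → ℝ} (hm : ∀ e, m e ^ 2 ≤ 1) :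
    ∑ u, (∑ e with p e 0 = u, m e) ^ 2 ≤ Fintype.card E +
      ∑ θ : LinkedPair p with col θ.1.1 ≠ col θ.1.2, m θ.1.1 * m θ.1.2 := by
  have hdiag (θ : LinkedPair p) (hθ : col θ.1.1 = col θ.1.2) : θ.1.1 = θ.1.2 :=
    h.injective_apply 0 (Prod.ext hθ θ.2)
  have hcard : #{θ : LinkedPair p | col θ.1.1 = col θ.1.2} ≤ Fintype.card E :=
    Finset.card_le_card_of_injOn (fun θ => θ.1.1) (by simp) fun θ hθ θ' hθ' hfst =>
      Subtype.ext (Prod.ext hfst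
        (((hdiag θ (by simpa using hθ)).symm.trans hfst).trans (hdiag θ' (by simpa using hθ'))))
  rw [sum_sq_sum_fiber_eq_sum_linkedPair,
    ← Finset.sum_filter_add_sum_filter_not univ fun θ : LinkedPair p => col θ.1.1 = col θ.1.2]
  gcongr
  calc _ ≤ ∑ θ : LinkedPair p with col θ.1.1 = col θ.1.2, (1 : ℝ) :=
        Finset.sum_le_sum fun θ hθ => by
          rw [← hdiag θ (Finset.mem_filter.1 hθ).2, ← sq]
          exact hm _
    _ ≤ Fintype.card E := by
        rw [Finset.sum_const, nsmul_one]
        exact_mod_cast hcard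

variable [Fintype ι] [Nonempty ι]

lemma expect_cross_sum_le (h : IsMatchingFamily col p) {d : ℝ} (hd : 0 ≤ d)
    (hcodeg : ∀ a ≠ 0, ∀ u w, (#{e | p e 0 = u ∧ p e a = w} : ℝ) ≤ d) {J : Type*} [Fintype J]
    [Nonempty J] (hJ : Fintype.card V * d ≤ Fintype.card ι * Fintype.card J ^ 2)
    (hV : 2 ≤ Fintype.card V) {s : E → ℝ} (hs : ∀ e, |s e| ≤ 1) {x : (ι → Bool) → V → ℝ}
    (hx : ∀ b v, x b v ^ 2 = 1) :
    𝔼 b : ι → Bool, ∑ θ : LinkedPair p with col θ.1.1 ≠ col θ.1.2,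
        (bitSign (b (col θ.1.1)) * s θ.1.1 * (x b (p θ.1.1 1) * x b (p θ.1.1 2))) *
        (bitSign (b (col θ.1.2)) * s θ.1.2 * (x b (p θ.1.2 1) * x b (p θ.1.2 2)))
      ≤ 4 * √(458752 * (Fintype.card ι : ℝ) ^ 3 * Fintype.card V ^ 2
        * (Fintype.card J * Real.log (Fintype.card V))) := by
  have habs (t : Bool) : |bitSign t| = 1 := by cases t <;> simp [bitSign]
  refine expect_sum_filter_ne_le (fun θ : LinkedPair p => col θ.1.1) (fun θ => col θ.1.2)
    (fun b θ => (bitSign (b (col θ.1.1)) * s θ.1.1 * (x b (p θ.1.1 1) * x b (p θ.1.1 2))) *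
        (bitSign (b (col θ.1.2)) * s θ.1.2 * (x b (p θ.1.2 1) * x b (p θ.1.2 2)))) fun L b => ?_
  -- Once `b` is fixed on the true side of the cut, the second sign is a constant coefficient.
  set c : LinkedPair p → ℝ := fun θ => if L (col θ.1.1) = false ∧ L (col θ.1.2) = true then
    s θ.1.1 * s θ.1.2 * bitSign (b (col θ.1.2)) else 0
  have hc (θ) : |c θ| ≤ 1 := by
    simp only [c]
    split_ifs
    · rw [abs_mul, abs_mul, habs, mul_one]
      exact mul_le_one₀ (hs _) (abs_nonneg _) (hs _)
    · simp
  have hbound := expect_sum_linkedPair_sq_le h hd hcodeg hJ hV hc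
    (x := fun b' => x (mixBits L b' b)) fun b' => hx _
  refine le_trans (le_of_eq ?_) ((le_abs_self _).trans (Real.abs_le_sqrt hbound))
  refine Finset.expect_congr rfl fun b' _ => ?_
  rw [Finset.sum_filter]
  refine Finset.sum_congr rfl fun θ _ => ?_
  simp only [c]
  split_ifs with hcut
  · simp only [mixBits, hcut, if_true, Bool.false_eq_true, if_false]
    ring
  · ring

lemma sq_mul_card_le_of_codegree_le (h : IsMatchingFamily col p) {d : ℝ} (hd : 0 ≤ d)
    (hcodeg : ∀ a ≠ 0, ∀ u w, (#{e | p e 0 = u ∧ p e a = w} : ℝ) ≤ d) {J : Type*} [Fintype J]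
    [Nonempty J] (hJ : Fintype.card V * d ≤ Fintype.card ι * Fintype.card J ^ 2)
    (hV : 2 ≤ Fintype.card V) {s : E → ℝ} (hs : ∀ e, |s e| ≤ 1) {x : (ι → Bool) → V → ℝ}
    (hx : ∀ b v, x b v ^ 2 = 1) {ε : ℝ} (hε : 0 ≤ ε)
    (hcorr : ∀ e, ε ≤ 𝔼 b : ι → Bool,
      bitSign (b (col e)) * s e * (x b (p e 0) * x b (p e 1) * x b (p e 2))) :
    (ε * Fintype.card E) ^ 2 ≤ Fintype.card V * (Fintype.card E +
      4 * √(458752 * (Fintype.card ι : ℝ) ^ 3 * Fintype.card V ^ 2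
        * (Fintype.card J * Real.log (Fintype.card V)))) := by
  set m : (ι → Bool) → E → ℝ := fun b e =>
    bitSign (b (col e)) * s e * (x b (p e 1) * x b (p e 2))
  have hm (b e) : m b e ^ 2 ≤ 1 := by
    simp only [m, mul_pow, hx, sq (bitSign _), bitSign_mul_self, one_mul, mul_one]
    exact (sq_le_one_iff_abs_le_one _).2 (hs e)
  have hsplit (b) : ∑ e, bitSign (b (col e)) * s e * (x b (p e 0) * x b (p e 1) * x b (p e 2))
      = ∑ u, x b u * ∑ e with p e 0 = u, m b e := by
    rw [← Finset.sum_fiberwise univ fun e => p e 0]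
    refine Finset.sum_congr rfl fun u _ => ?_
    rw [Finset.mul_sum]
    refine Finset.sum_congr rfl fun e he => ?_
    simp only [m, ← (Finset.mem_filter.1 he).2]
    ring
  have hcauchy (b) : (∑ u, x b u * ∑ e with p e 0 = u, m b e) ^ 2
      ≤ Fintype.card V * ∑ u, (∑ e with p e 0 = u, m b e) ^ 2 :=
    (Finset.sum_mul_sq_le_sq_mul_sq univ _ _).trans_eq (by simp [hx])
  calc (ε * Fintype.card E) ^ 2
      ≤ (𝔼 b, ∑ u, x b u * ∑ e with p e 0 = u, m b e) ^ 2 := by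
        refine pow_le_pow_left₀ (by positivity) ?_ 2
        simp only [← hsplit]
        rw [Finset.expect_sum_comm, mul_comm, ← nsmul_eq_mul, ← Finset.card_univ]
        exact Finset.card_nsmul_le_sum _ _ _ fun e _ => hcorr e
    _ ≤ 𝔼 b, (∑ u, x b u * ∑ e with p e 0 = u, m b e) ^ 2 := expect_pow_le_of_even _ even_two
    _ ≤ 𝔼 b : ι → Bool, Fintype.card V * (Fintype.card E +
          ∑ θ : LinkedPair p with col θ.1.1 ≠ col θ.1.2, m b θ.1.1 * m b θ.1.2) :=
        Finset.expect_le_expect fun b _ => (hcauchy b).trans <|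
          mul_le_mul_of_nonneg_left (sum_sq_sum_fiber_le h (hm b)) (Nat.cast_nonneg _)
    _ = Fintype.card V * (Fintype.card E + 𝔼 b : ι → Bool,
          ∑ θ : LinkedPair p with col θ.1.1 ≠ col θ.1.2, m b θ.1.1 * m b θ.1.2) := by
        rw [← Finset.mul_expect, Finset.expect_add_distrib, Finset.expect_const univ_nonempty]
    _ ≤ _ := by
        gcongr
        exact expect_cross_sum_le h hd hcodeg hJ hV hs hx

lemma mul_card_pow_four_le_of_codegree_le (h : IsMatchingFamily col p) {d : ℝ} (hd : 0 ≤ d)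
    (hcodeg : ∀ a ≠ 0, ∀ u w, (#{e | p e 0 = u ∧ p e a = w} : ℝ) ≤ d) {J : Type*} [Fintype J]
    [Nonempty J] (hJ : Fintype.card V * d ≤ Fintype.card ι * Fintype.card J ^ 2)
    (hV : 2 ≤ Fintype.card V) {s : E → ℝ} (hs : ∀ e, |s e| ≤ 1) {x : (ι → Bool) → V → ℝ}
    (hx : ∀ b v, x b v ^ 2 = 1) {ε : ℝ} (hε : 0 ≤ ε)
    (hcorr : ∀ e, ε ≤ 𝔼 b : ι → Bool,
      bitSign (b (col e)) * s e * (x b (p e 0) * x b (p e 1) * x b (p e 2))) :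
    (ε * Fintype.card E) ^ 4 ≤ 11468800 * (Fintype.card ι : ℝ) ^ 3 * Fintype.card V ^ 4
      * (Fintype.card J * Real.log (Fintype.card V)) := by
  have hbound := sq_mul_card_le_of_codegree_le h hd hcodeg hJ hV hs hx hε hcorr
  have hE : (Fintype.card E : ℝ) ≤ Fintype.card ι * Fintype.card V := by
    exact_mod_cast (Fintype.card_le_of_injective _ (h.injective_apply 0)).trans_eq
      (Fintype.card_prod ι V)
  have hn : (2 : ℝ) ≤ Fintype.card V := by exact_mod_cast hV
  have hlog : 1 / 2 ≤ Real.log (Fintype.card V) := by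
    linarith [Real.log_le_log (by norm_num) hn, Real.log_two_gt_d9]
  set k : ℝ := (Fintype.card ι : ℝ)
  set n : ℝ := (Fintype.card V : ℝ)
  set l : ℝ := (Fintype.card J : ℝ)
  have hk : 1 ≤ k := Nat.one_le_cast.2 Fintype.card_pos
  have hl : 1 ≤ l := Nat.one_le_cast.2 Fintype.card_pos
  set B := 458752 * k ^ 3 * n ^ 2 * (l * Real.log n) with hB
  have hEB : (Fintype.card E : ℝ) ≤ √B := by
    refine hE.trans (Real.le_sqrt_of_sq_le ?_)
    calc (k * n) ^ 2 = 2 * k ^ 2 * n ^ 2 * (1 * (1 / 2)) := by ring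
      _ ≤ 458752 * k ^ 3 * n ^ 2 * (l * Real.log n) := by
        gcongr <;> norm_num
  calc (ε * Fintype.card E) ^ 4 = ((ε * Fintype.card E) ^ 2) ^ 2 := by ring
    _ ≤ (n * (√B + 4 * √B)) ^ 2 := by
        gcongr
        exact hbound.trans (by gcongr)
    _ = _ := by
        rw [← one_add_mul, mul_pow, mul_pow, Real.sq_sqrt (by positivity), hB]
        ring

end LightTriples

section Threshold

lemma exists_nat_mul_sq_mem_Icc {k m : ℝ} (hk : 0 < k) (hm : 0 < m) :
    ∃ l : ℕ, 1 ≤ l ∧ k * l ^ 2 ∈ Set.Icc m (2 * m + 2 * k) := by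
  have hsq : k * √(m / k) ^ 2 = m := by
    rw [Real.sq_sqrt (by positivity), mul_div_cancel₀ _ hk.ne']
  refine ⟨⌈√(m / k)⌉₊, Nat.one_le_ceil_iff.2 (by positivity), ?_, ?_⟩
  · calc m = k * √(m / k) ^ 2 := hsq.symm
      _ ≤ _ := by gcongr; exact Nat.le_ceil _
  · calc k * (⌈√(m / k)⌉₊ : ℝ) ^ 2 ≤ k * (√(m / k) + 1) ^ 2 := by
          gcongr
          exact (Nat.ceil_lt_add_one (Real.sqrt_nonneg _)).le
      _ ≤ k * (2 * (√(m / k) ^ 2 + 1 ^ 2)) := by gcongr; exact add_sq_le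
      _ = 2 * m + 2 * k := by linear_combination 2 * hsq

lemma cube_le_of_le_mul {k n L η d l A : ℝ} (hk : 0 < k) (hn : 1 ≤ n) (hL : 0 ≤ L) (hη : 0 < η)
    (hA : 0 ≤ A) (hd : d * η ≤ A * L) (hl : k * l ^ 2 ≤ 2 * (n * d) + 2 * k)
    (h : k * η ≤ A * (l * L)) : (k * η) ^ 3 ≤ 8 * A ^ 3 * n * L ^ 3 := by
  set y := k * η with hy
  have hy0 : 0 < y := by positivity
  have hcube : y ^ 3 ≤ (A * L) ^ 2 * (2 * (n * (A * L)) + 2 * y) := by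
    calc y ^ 3 = y * y ^ 2 := by ring
      _ ≤ y * (A * (l * L)) ^ 2 := by gcongr
      _ = (A * L) ^ 2 * η * (k * l ^ 2) := by rw [hy]; ring
      _ ≤ (A * L) ^ 2 * η * (2 * (n * d) + 2 * k) := by gcongr
      _ = (A * L) ^ 2 * (2 * (n * (d * η)) + 2 * y) := by rw [hy]; ring
      _ ≤ _ := by gcongr
  rcases le_total y (n * (A * L)) with hle | hge
  · calc y ^ 3 ≤ (A * L) ^ 2 * (2 * (n * (A * L)) + 2 * (n * (A * L))) := hcube.trans (by gcongr)
      _ = 4 * A ^ 3 * n * L ^ 3 := by ring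
      _ ≤ 8 * A ^ 3 * n * L ^ 3 := by gcongr; norm_num
  · have hsq : y * y ^ 2 ≤ y * (2 * (A * L)) ^ 2 := by
      calc y * y ^ 2 = y ^ 3 := by ring
        _ ≤ (A * L) ^ 2 * (2 * y + 2 * y) := hcube.trans (by gcongr)
        _ = _ := by ring
    calc y ^ 3 ≤ (2 * (A * L)) ^ 3 := pow_le_pow_left₀ hy0.le
          (le_of_sq_le_sq (le_of_mul_le_mul_left hsq hy0) (by positivity)) 3
      _ = 8 * A ^ 3 * 1 * L ^ 3 := by ring
      _ ≤ _ := by gcongr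

end Threshold

section Core

/-- The codegree of the triple `e` in the positions `0` and `a`: the number of triples with the
same vertices as `e` in these two positions. -/
def codegree {V E : Type*} [Fintype E] (p : E → Fin 3 → V) (a : Fin 3) (e : E) : ℕ :=
  #{e' | p e' 0 = p e 0 ∧ p e' a = p e a}

variable {ι V E : Type*} [Fintype ι] [DecidableEq ι] [Nonempty ι] [Fintype V] [Nonempty V]
  [Fintype E] {col : E → ι} {p : E → Fin 3 → V} {s : E → ℝ} {x : (ι → Bool) → V → ℝ} {ε δ : ℝ}

lemma sq_mul_card_lt_codegree_le (h : IsMatchingFamily col p) (hV : 2 ≤ Fintype.card V)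
    (hs : ∀ e, |s e| ≤ 1) (hx : ∀ b v, x b v ^ 2 = 1) (hε : 0 ≤ ε)
    (hcorr : ∀ e, ε ≤ 𝔼 b : ι → Bool,
      bitSign (b (col e)) * s e * (x b (p e 0) * x b (p e 1) * x b (p e 2)))
    {a : Fin 3} (ha : a ≠ 0) {d : ℝ} (hd : 0 < d) :
    (ε * #{e | d < codegree p a e}) ^ 2
      ≤ 560 * Fintype.card ι ^ 2 * Fintype.card V ^ 2 * Real.log (Fintype.card V) / d := by
  have hn : (2 : ℝ) ≤ Fintype.card V := by exact_mod_cast hV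
  have hlog : Real.log (Fintype.card V + Fintype.card (V × V)) + 1
      ≤ 5 * Real.log (Fintype.card V) := by
    have hlog2 := Real.log_le_log (by norm_num) hn
    rw [Fintype.card_prod, Nat.cast_mul]
    set n : ℝ := (Fintype.card V : ℝ)
    have := Real.log_le_log (by positivity) (by nlinarith : n + n * n ≤ n ^ 3)
    rw [Real.log_pow] at this
    push_cast at this
    linarith [Real.log_two_gt_d9]
  have hbound := sq_mul_card_heavy_le (h.injective_apply (3 - a))
    (tgt := fun e => (p e 0, p e a)) (fun e e' hee => h.injective_apply 0 <| Prod.ext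
      (congrArg (fun q => q.1) hee) (congrArg (fun q => q.2.1) hee)) hs
    (x := x) (fun b v => (hx b v).le) (y := fun b w => x b w.1 * x b w.2)
    (fun b w => by rw [mul_pow, hx, hx, one_mul]) hε hd fun e => (hcorr e).trans_eq
      (Finset.expect_congr rfl fun b _ => by
        fin_cases a
        · exact absurd rfl ha
        · change _ = _ * (x b (p e 2) * (x b (p e 0) * x b (p e 1)))
          ring
        · change _ = _ * (x b (p e 1) * (x b (p e 0) * x b (p e 2)))
          ring)
  simp only [Prod.mk.injEq] at hbound
  calc _ ≤ _ := hbound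
    _ ≤ 112 * Fintype.card ι ^ 2 * Fintype.card V ^ 2 * (5 * Real.log (Fintype.card V)) / d := by
        gcongr
    _ = _ := by ring

lemma mul_le_card_codegree_le (h : IsMatchingFamily col p) (hV : 2 ≤ Fintype.card V)
    (hs : ∀ e, |s e| ≤ 1) (hx : ∀ b v, x b v ^ 2 = 1) (hε : 0 < ε) (hδ : 0 < δ)
    (hE : δ * Fintype.card ι * Fintype.card V ≤ Fintype.card E)
    (hcorr : ∀ e, ε ≤ 𝔼 b : ι → Bool,
      bitSign (b (col e)) * s e * (x b (p e 0) * x b (p e 1) * x b (p e 2)))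
    {d : ℝ} (hd : d = 8960 * Real.log (Fintype.card V) / (ε ^ 2 * δ ^ 2)) :
    δ / 2 * Fintype.card ι * Fintype.card V
      ≤ Fintype.card {e // ∀ a ≠ 0, (codegree p a e : ℝ) ≤ d} := by
  have hlog : 0 < Real.log (Fintype.card V) := Real.log_pos (by exact_mod_cast hV)
  have hd0 : 0 < d := by rw [hd]; positivity
  have hheavy (a : Fin 3) (ha : a ≠ 0) :
      (#{e | d < codegree p a e} : ℝ) ≤ δ * Fintype.card ι * Fintype.card V / 4 := by
    have hbound := sq_mul_card_lt_codegree_le h hV hs hx hε.le hcorr ha hd0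
    refine le_of_mul_le_mul_left (le_of_sq_le_sq (hbound.trans_eq ?_) (by positivity)) hε
    rw [hd]
    field_simp
    norm_num
  have hcover : (univ : Finset E) ⊆ ({e | ∀ a ≠ 0, (codegree p a e : ℝ) ≤ d} : Finset E) ∪
      (({e | d < codegree p 1 e} : Finset E) ∪ ({e | d < codegree p 2 e} : Finset E)) := by
    intro e _
    simp only [mem_union, mem_filter, mem_univ, true_and]
    refine or_iff_not_imp_right.2 fun hlight a ha => ?_
    rw [not_or, not_lt, not_lt] at hlight
    fin_cases a
    exacts [absurd rfl ha, hlight.1, hlight.2]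
  have hcard : (Fintype.card E : ℝ) ≤ #{e | ∀ a ≠ 0, (codegree p a e : ℝ) ≤ d} +
      (#{e | d < codegree p 1 e} + #{e | d < codegree p 2 e}) := by
    exact_mod_cast (Finset.card_le_card hcover).trans ((Finset.card_union_le _ _).trans
      (Nat.add_le_add_left (Finset.card_union_le _ _) _))
  rw [Fintype.card_subtype]
  linarith [hheavy 1 (by decide), hheavy 2 (by decide)]

lemma mul_pow_four_le_of_mul_le_mul_sq (h : IsMatchingFamily col p) (hV : 2 ≤ Fintype.card V)
    (hs : ∀ e, |s e| ≤ 1) (hx : ∀ b v, x b v ^ 2 = 1) (hε : 0 < ε) (hδ : 0 < δ)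
    (hE : δ * Fintype.card ι * Fintype.card V ≤ Fintype.card E)
    (hcorr : ∀ e, ε ≤ 𝔼 b : ι → Bool,
      bitSign (b (col e)) * s e * (x b (p e 0) * x b (p e 1) * x b (p e 2)))
    {d : ℝ} (hd : d = 8960 * Real.log (Fintype.card V) / (ε ^ 2 * δ ^ 2)) {J : Type*} [Fintype J]
    [Nonempty J] (hJ : Fintype.card V * d ≤ Fintype.card ι * Fintype.card J ^ 2) :
    Fintype.card ι * (ε ^ 4 * δ ^ 4)
      ≤ 183500800 * (Fintype.card J * Real.log (Fintype.card V)) := by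
  have hd0 : 0 ≤ d := by rw [hd]; positivity
  have hlight := mul_le_card_codegree_le h hV hs hx hε hδ hE hcorr hd
  have hcodeg (a : Fin 3) (ha : a ≠ 0) (u w : V) : (#{e : {e // ∀ a ≠ 0, (codegree p a e : ℝ) ≤ d} |
      p e 0 = u ∧ p e a = w} : ℝ) ≤ d := by
    rcases Finset.eq_empty_or_nonempty {e : {e // ∀ a ≠ 0, (codegree p a e : ℝ) ≤ d} |
      p e 0 = u ∧ p e a = w} with hempty | ⟨e₀, he₀⟩
    · rw [hempty]; simpa using hd0
    · obtain ⟨rfl, rfl⟩ := (Finset.mem_filter.1 he₀).2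
      refine le_trans ?_ (e₀.2 a ha)
      exact_mod_cast Finset.card_le_card_of_injOn Subtype.val (fun e he => by simpa using he)
        Subtype.val_injective.injOn
  have hbound := mul_card_pow_four_le_of_codegree_le (h.comp Subtype.val_injective) hd0 hcodeg hJ hV
    (fun e => hs e) hx hε.le fun e => hcorr e
  have hk : (0 : ℝ) < Fintype.card ι := Nat.cast_pos.2 Fintype.card_pos
  have hn : (0 : ℝ) < Fintype.card V := Nat.cast_pos.2 Fintype.card_pos
  set k : ℝ := (Fintype.card ι : ℝ)
  set n : ℝ := (Fintype.card V : ℝ)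
  refine le_of_mul_le_mul_left ?_ (by positivity : 0 < k ^ 3 * n ^ 4 / 16)
  calc k ^ 3 * n ^ 4 / 16 * (k * (ε ^ 4 * δ ^ 4)) = (ε * (δ / 2 * k * n)) ^ 4 := by ring
    _ ≤ _ := (pow_le_pow_left₀ (by positivity) (by gcongr) 4).trans hbound
    _ = _ := by ring

theorem card_cube_le_of_correlated_triples (h : IsMatchingFamily col p) (hs : ∀ e, |s e| ≤ 1)
    (hx : ∀ b v, x b v ^ 2 = 1) (hε : 0 < ε) (hδ : 0 < δ)
    (hE : δ * Fintype.card ι * Fintype.card V ≤ Fintype.card E)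
    (hcorr : ∀ e, ε ≤ 𝔼 b : ι → Bool,
      bitSign (b (col e)) * s e * (x b (p e 0) * x b (p e 1) * x b (p e 2))) :
    (Fintype.card ι * (ε ^ 4 * δ ^ 4)) ^ 3
      ≤ 8 * 183500800 ^ 3 * Fintype.card V * Real.log (Fintype.card V) ^ 3 := by
  have hk : (0 : ℝ) < Fintype.card ι := Nat.cast_pos.2 Fintype.card_pos
  have hn : (0 : ℝ) < Fintype.card V := Nat.cast_pos.2 Fintype.card_pos
  have hE0 : (0 : ℝ) < Fintype.card E := lt_of_lt_of_le (by positivity) hE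
  obtain ⟨e⟩ := Fintype.card_pos_iff.1 (Nat.cast_pos.1 hE0)
  have hV : 3 ≤ Fintype.card V := by
    simpa using Fintype.card_le_of_injective _ (h.injective_tuple e)
  have hlog : 0 < Real.log (Fintype.card V) := Real.log_pos (by exact_mod_cast hV.trans' (by simp))
  have hε1 : ε ≤ 1 := (hcorr e).trans <| Finset.expect_le univ_nonempty fun b _ =>
    le_of_abs_le <| (sq_le_one_iff_abs_le_one _).1 <| by
      simp only [mul_pow, hx, sq (bitSign _), bitSign_mul_self, one_mul, mul_one]
      exact (sq_le_one_iff_abs_le_one _).2 (hs e)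
  have hδ1 : δ ≤ 1 := by
    have hcard : (Fintype.card E : ℝ) ≤ Fintype.card ι * Fintype.card V := by
      exact_mod_cast (Fintype.card_le_of_injective _ (h.injective_apply 0)).trans_eq
        (Fintype.card_prod ι V)
    refine le_of_mul_le_mul_right ?_ (mul_pos hk hn)
    linarith
  set d : ℝ := 8960 * Real.log (Fintype.card V) / (ε ^ 2 * δ ^ 2) with hd
  obtain ⟨l, hl, hlow, hhigh⟩ := exists_nat_mul_sq_mem_Icc hk (by positivity :
    0 < Fintype.card V * d)
  have : Nonempty (Fin l) := ⟨⟨0, hl⟩⟩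
  have hbound := mul_pow_four_le_of_mul_le_mul_sq h (by lia) hs hx hε hδ hE hcorr hd
    (J := Fin l) (by simpa using hlow)
  refine cube_le_of_le_mul hk (by exact_mod_cast Fintype.card_pos (α := V)) hlog.le (by positivity)
    (by norm_num) ?_ hhigh (by simpa using hbound)
  calc d * (ε ^ 4 * δ ^ 4) = 8960 * Real.log (Fintype.card V) * (ε ^ 2 * δ ^ 2) := by
        rw [hd]; field_simp
    _ ≤ 183500800 * Real.log (Fintype.card V) * (1 ^ 2 * 1 ^ 2) := by
        gcongr; norm_num
    _ = _ := by ring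

end Core

section Alphabet

/-- A Hadamard system on `α`: functions `h t : α → ℝ` with values `±1`, one for each `t : Q`, such
that the vectors `h · a` and `h · a'` are orthogonal for `a ≠ a'`. It plays the role of the
characters of `α` in the reduction from codes over `α` to codes over `{1, -1}`. -/
structure IsHadamardSystem {Q α : Type*} [Fintype Q] (h : Q → α → ℝ) : Prop where
  sq_eq_one : ∀ t a, h t a ^ 2 = 1
  sum_mul : ∀ a a', ∑ t, h t a * h t a' = if a = a' then (Fintype.card Q : ℝ) else 0

lemma IsHadamardSystem.pi {Q α J : Type*} [Fintype Q] [Fintype J] [DecidableEq J]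
    {h : Q → α → ℝ} (hh : IsHadamardSystem h) :
    IsHadamardSystem fun (t : J → Q) (a : J → α) => ∏ j, h (t j) (a j) where
  sq_eq_one t a := by simp [← Finset.prod_pow, hh.sq_eq_one]
  sum_mul a a' := by
    simp_rw [← Finset.prod_mul_distrib]
    rw [← Fintype.prod_sum fun j q => h q (a j) * h q (a' j)]
    simp_rw [hh.sum_mul]
    split_ifs with heq
    · simp [heq]
    · obtain ⟨j, hj⟩ := Function.ne_iff.1 heq
      exact Finset.prod_eq_zero (mem_univ j) (if_neg hj)

lemma IsHadamardSystem.comp {Q α β : Type*} [Fintype Q] {h : Q → α → ℝ} (hh : IsHadamardSystem h)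
    {φ : β → α} (hφ : Function.Injective φ) : IsHadamardSystem fun t a => h t (φ a) where
  sq_eq_one t a := hh.sq_eq_one t (φ a)
  sum_mul a a' := by simp only [hh.sum_mul, hφ.eq_iff]

lemma isHadamardSystem_bitSign_and : IsHadamardSystem fun t y : Bool => bitSign (t && y) where
  sq_eq_one t y := by rw [sq, bitSign_mul_self]
  sum_mul y y' := by cases y <;> cases y' <;> norm_num [bitSign]

lemma exists_le_two_pow_le_two_mul {a : ℕ} (ha : 0 < a) : ∃ m : ℕ, a ≤ 2 ^ m ∧ 2 ^ m ≤ 2 * a := by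
  refine ⟨Nat.clog 2 a, Nat.le_pow_clog one_lt_two a, ?_⟩
  rcases Nat.lt_or_ge 1 a with h | h
  · rw [← Nat.succ_pred_eq_of_pos (Nat.clog_pos one_lt_two h), Nat.succ_eq_add_one, pow_succ']
    exact Nat.mul_le_mul_left 2 (Nat.pow_pred_clog_lt_self one_lt_two h).le
  · rw [Nat.clog_of_right_le_one h]
    lia

lemma exists_isHadamardSystem (α : Type*) [Fintype α] [Nonempty α] :
    ∃ (m : ℕ) (h : (Fin m → Bool) → α → ℝ), IsHadamardSystem h ∧ 2 ^ m ≤ 2 * Fintype.card α := by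
  obtain ⟨m, hle, hm⟩ := exists_le_two_pow_le_two_mul (Fintype.card_pos (α := α))
  obtain ⟨φ⟩ : Nonempty (α ↪ (Fin m → Bool)) :=
    Function.Embedding.nonempty_of_card_le (by simpa using hle)
  exact ⟨m, _, isHadamardSystem_bitSign_and.pi.comp φ.injective, hm⟩

section Correlation

variable {Ω Q α : Type*} [Fintype Ω] [Fintype Q] [Fintype α] {h : Q → α → ℝ}

lemma IsHadamardSystem.sum_sq_sum_mul (hh : IsHadamardSystem h) (μ : α → ℝ) :
    ∑ t, (∑ a, h t a * μ a) ^ 2 = Fintype.card Q * ∑ a, μ a ^ 2 := by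
  calc ∑ t, (∑ a, h t a * μ a) ^ 2 = ∑ a, ∑ a', (∑ t, h t a * h t a') * (μ a * μ a') := by
        simp only [sq, Finset.sum_mul_sum]
        rw [Finset.sum_comm]
        refine Finset.sum_congr rfl fun a _ => ?_
        rw [Finset.sum_comm]
        refine Finset.sum_congr rfl fun a' _ => ?_
        rw [Finset.sum_mul]
        exact Finset.sum_congr rfl fun t _ => by ring
    _ = _ := by simp [hh.sum_mul, Finset.mul_sum, sq]

lemma IsHadamardSystem.exists_sq_le_card_mul_sq [Nonempty Q] (hh : IsHadamardSystem h) (y : Ω → α)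
    (w : Ω → ℝ) {F : α → ℝ} (hF : ∀ a, F a ^ 2 ≤ 1) {ε : ℝ} (hε : 0 ≤ ε)
    (hcorr : ε ≤ 𝔼 ω, w ω * F (y ω)) :
    ∃ t, ε ^ 2 ≤ Fintype.card α * (𝔼 ω, w ω * h t (y ω)) ^ 2 := by
  set μ : α → ℝ := fun a => 𝔼 ω, if y ω = a then w ω else 0
  have hexp (G : α → ℝ) : 𝔼 ω, w ω * G (y ω) = ∑ a, G a * μ a := by
    simp only [μ, Finset.mul_expect]
    rw [← Finset.expect_sum_comm]
    exact Finset.expect_congr rfl fun ω _ => by simp [mul_comm]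
  have hcauchy : ε ^ 2 ≤ Fintype.card α * ∑ a, μ a ^ 2 := by
    calc ε ^ 2 ≤ (∑ a, F a * μ a) ^ 2 := pow_le_pow_left₀ hε (hcorr.trans_eq (hexp F)) 2
      _ ≤ (∑ a, F a ^ 2) * ∑ a, μ a ^ 2 := Finset.sum_mul_sq_le_sq_mul_sq univ F μ
      _ ≤ Fintype.card α * ∑ a, μ a ^ 2 := by
        gcongr
        exact (Finset.sum_le_sum fun a _ => hF a).trans_eq (by simp)
  by_contra! hcon
  have hsum : ∑ t : Q, Fintype.card α * (𝔼 ω, w ω * h t (y ω)) ^ 2 < ∑ _t : Q, ε ^ 2 :=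
    Finset.sum_lt_sum_of_nonempty univ_nonempty fun t _ => hcon t
  simp only [hexp] at hsum
  rw [← Finset.mul_sum, hh.sum_sq_sum_mul, Finset.sum_const, nsmul_eq_mul, card_univ] at hsum
  exact absurd (mul_le_mul_of_nonneg_left hcauchy (Nat.cast_nonneg (Fintype.card Q)))
    (not_le.2 (by linarith))

lemma IsHadamardSystem.exists_div_sqrt_le [Nonempty Q] [Nonempty α] {J : Type*} [Fintype J]
    (hh : IsHadamardSystem h) (y : Ω → J → α) (w : Ω → ℝ) {F : (J → α) → ℝ}
    (hF : ∀ a, F a ^ 2 ≤ 1) {ε : ℝ} (hε : 0 ≤ ε) (hcorr : ε ≤ 𝔼 ω, w ω * F (y ω)) :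
    ∃ (t : J → Q) (s : ℝ), |s| ≤ 1 ∧ ε / √((Fintype.card α : ℝ) ^ Fintype.card J)
      ≤ 𝔼 ω, w ω * s * ∏ j, h (t j) (y ω j) := by
  obtain ⟨t, ht⟩ := hh.pi.exists_sq_le_card_mul_sq y w hF hε hcorr
  rw [Fintype.card_fun, Nat.cast_pow] at ht
  have hα : (0 : ℝ) < (Fintype.card α : ℝ) ^ Fintype.card J :=
    pow_pos (Nat.cast_pos.2 Fintype.card_pos) _
  set z := 𝔼 ω, w ω * ∏ j, h (t j) (y ω j) with hz
  have habs : ε / √((Fintype.card α : ℝ) ^ Fintype.card J) ≤ |z| := by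
    refine le_of_sq_le_sq ?_ (abs_nonneg z)
    rwa [div_pow, Real.sq_sqrt hα.le, sq_abs, div_le_iff₀' hα]
  have hscale (s : ℝ) : 𝔼 ω, w ω * s * ∏ j, h (t j) (y ω j) = s * z := by
    rw [hz, Finset.mul_expect]
    exact Finset.expect_congr rfl fun ω _ => by ring
  refine ⟨t, SignType.sign z, ?_, ?_⟩
  · rcases lt_trichotomy z 0 with h | h | h <;> simp [h]
  · rwa [hscale, sign_mul_self]

end Correlation

section LargeAlphabet

variable {ι V α E : Type*} [Fintype ι] [DecidableEq ι] [Nonempty ι] [Fintype V] [Nonempty V]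
  [Fintype α] [Fintype E] {col : E → ι} {p : E → Fin 3 → V}

lemma log_mul_le_two_mul_log {n a q : ℝ} (hn : 2 ≤ n) (ha : 1 ≤ a) (hq : 0 < q)
    (hqa : q ≤ 2 * a) : Real.log (n * q) ≤ 2 * Real.log (a * n) := by
  rw [← Nat.cast_two, ← Real.log_pow]
  refine Real.log_le_log (by positivity) ?_
  calc n * q ≤ n * (2 * a) := by gcongr
    _ = 2 * (a * n) := by ring
    _ ≤ (a * n) * (a * n) := by gcongr; nlinarith
    _ = (a * n) ^ 2 := by ring

lemma pow_le_of_rescaled_pow_le {k n L LN q a ε δ A : ℝ} (ha : 0 < a) (hA : 0 ≤ A) (hn : 0 ≤ n)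
    (hq : q ≤ 2 * a) (hLN : 0 ≤ LN) (hL : LN ≤ 2 * L)
    (h : (k * ((ε / √(a ^ 3)) ^ 4 * (δ / (2 * a)) ^ 4)) ^ 3 ≤ A * (n * q) * LN ^ 3) :
    (k * (ε ^ 4 * δ ^ 4)) ^ 3 ≤ 16 ^ 4 * A * a ^ 31 * n * L ^ 3 := by
  have hsqrt : √(a ^ 3) ^ 4 = a ^ 6 := by
    rw [pow_mul _ 2 2, Real.sq_sqrt (by positivity)]
    ring
  rw [div_pow, hsqrt] at h
  calc (k * (ε ^ 4 * δ ^ 4)) ^ 3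
      = 16 ^ 3 * a ^ 30 * (k * (ε ^ 4 / a ^ 6 * (δ / (2 * a)) ^ 4)) ^ 3 := by
        field_simp
        norm_num
    _ ≤ 16 ^ 3 * a ^ 30 * (A * (n * q) * LN ^ 3) := by gcongr
    _ ≤ 16 ^ 3 * a ^ 30 * (A * (n * (2 * a)) * (2 * L) ^ 3) := by gcongr
    _ = 16 ^ 4 * A * a ^ 31 * n * L ^ 3 := by ring

theorem card_cube_le_of_decodable_triples (hp : IsMatchingFamily col p) (y : (ι → Bool) → V → α)
    {F : E → (Fin 3 → α) → ℝ} (hF : ∀ e a, F e a ^ 2 ≤ 1) {ε δ : ℝ} (hε : 0 < ε) (hδ : 0 < δ)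
    (hE : δ * Fintype.card ι * Fintype.card V ≤ Fintype.card E)
    (hcorr : ∀ e, ε ≤ 𝔼 b : ι → Bool, bitSign (b (col e)) * F e fun j => y b (p e j)) :
    (Fintype.card ι * (ε ^ 4 * δ ^ 4)) ^ 3 ≤ 16 ^ 4 * (8 * 183500800 ^ 3) *
      Fintype.card α ^ 31 * Fintype.card V * Real.log (Fintype.card α * Fintype.card V) ^ 3 := by
  have hn : (0 : ℝ) < Fintype.card V := Nat.cast_pos.2 Fintype.card_pos
  obtain ⟨e₀⟩ : Nonempty E := Fintype.card_pos_iff.1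
    (Nat.cast_pos.1 (lt_of_lt_of_le (by positivity) hE))
  have : Nonempty α := ⟨y (fun _ => false) (p e₀ 0)⟩
  have ha : (1 : ℝ) ≤ Fintype.card α := Nat.one_le_cast.2 Fintype.card_pos
  have hn3 : 3 ≤ Fintype.card V := by
    simpa using Fintype.card_le_of_injective _ (hp.injective_tuple e₀)
  have hn2 : (2 : ℝ) ≤ Fintype.card V := by exact_mod_cast hn3.trans' (by simp)
  obtain ⟨m, h, hh, hm⟩ := exists_isHadamardSystem α
  have hq : (2 : ℝ) ^ m ≤ 2 * Fintype.card α := by exact_mod_cast hm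
  have hq1 : (1 : ℝ) ≤ 2 ^ m := one_le_pow₀ one_le_two
  -- Each symbol `y b v` is replaced by the signs `h t (y b v)`, at the new vertices `(v, t)`.
  choose t s hs hts using fun e => hh.exists_div_sqrt_le (fun b j => y b (p e j))
    (fun b => bitSign (b (col e))) (hF e) hε.le (hcorr e)
  rw [Fintype.card_fin] at hts
  have hp' : IsMatchingFamily col fun e j => (p e j, t e j) := fun q q' hqq =>
    hp (Prod.ext (congrArg (fun r => r.1) hqq) (congrArg (fun r => r.2.1) hqq))
  have hcardV : (Fintype.card (V × (Fin m → Bool)) : ℝ) = Fintype.card V * 2 ^ m := by simp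
  have hE' : δ / (2 * Fintype.card α) * Fintype.card ι * Fintype.card (V × (Fin m → Bool))
      ≤ Fintype.card E := by
    calc δ / (2 * Fintype.card α) * Fintype.card ι * Fintype.card (V × (Fin m → Bool))
        ≤ δ / (2 * Fintype.card α) * Fintype.card ι
            * (Fintype.card V * (2 * Fintype.card α)) := by rw [hcardV]; gcongr
      _ = δ * Fintype.card ι * Fintype.card V := by field_simp
      _ ≤ Fintype.card E := hE
  have hbound := card_cube_le_of_correlated_triples hp' hs
    (x := fun b v => h v.2 (y b v.1)) (fun b v => hh.sq_eq_one _ _) (by positivity)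
    (by positivity) hE' fun e => (hts e).trans_eq (by simp [Fin.prod_univ_three])
  rw [hcardV] at hbound
  exact pow_le_of_rescaled_pow_le (by linarith) (by norm_num) hn.le hq
    (Real.log_nonneg (by nlinarith)) (log_mul_le_two_mul_log hn2 ha (by positivity) hq) hbound

end LargeAlphabet

end Alphabet

section HypergraphMatching

variable {n q : ℕ}

lemma IsMatching.mul_card_le {H : Finset (Finset (Fin n))} (hH : IsMatching q H) : q * #H ≤ n := by
  calc q * #H = ∑ C ∈ H, #C := by
        rw [Finset.sum_congr rfl hH.1, Finset.sum_const, smul_eq_mul, mul_comm]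
    _ = #(H.biUnion id) := (Finset.card_biUnion hH.2).symm
    _ ≤ n := (Finset.card_le_univ _).trans_eq (Fintype.card_fin n)

lemma IsMatching.mul_le_one_of_mul_le_card {H : Finset (Finset (Fin n))} (hH : IsMatching q H)
    (hn : 0 < n) {η : ℝ} (hη : η * n ≤ #H) : q * η ≤ 1 := by
  have hcard : (q * #H : ℝ) ≤ n := by exact_mod_cast hH.mul_card_le
  refine le_of_mul_le_mul_right ?_ (Nat.cast_pos.2 hn : (0 : ℝ) < n)
  calc q * η * n = q * (η * n) := by ring
    _ ≤ q * #H := by gcongr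
    _ ≤ 1 * n := by rwa [one_mul]

lemma isMatchingFamily_orderEmbOfFin {ι : Type*} {H : ι → Finset (Finset (Fin n))}
    (hH : ∀ i, IsMatching q (H i)) :
    IsMatchingFamily (fun e : Σ i, {C // C ∈ H i} => e.1)
      fun e => e.2.1.orderEmbOfFin ((hH e.1).1 _ e.2.2) := by
  rintro ⟨⟨i, C, hC⟩, j⟩ ⟨⟨i', C', hC'⟩, j'⟩ heq
  obtain ⟨rfl, hv⟩ : i = i' ∧ C.orderEmbOfFin ((hH i).1 _ hC) j
    = C'.orderEmbOfFin ((hH i').1 _ hC') j' := Prod.mk.inj heq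
  obtain rfl : C = C' := by
    by_contra hne
    exact Finset.disjoint_left.1 ((hH i).2 hC hC' hne) (C.orderEmbOfFin_mem _ j)
      (hv ▸ C'.orderEmbOfFin_mem _ j')
  rw [(C.orderEmbOfFin ((hH i).1 _ hC)).injective hv]

lemma exists_comp_orderEmbOfFin_of_dependsOn {α β : Type*} [Nonempty β] {C : Finset (Fin n)}
    (hC : #C = q) {g : (Fin n → α) → β} (hg : DependsOn g (C : Set (Fin n))) :
    ∃ F : (Fin q → α) → β, ∀ y, F (y ∘ C.orderEmbOfFin hC) = g y := by
  obtain ⟨F, rfl⟩ := dependsOn_iff_exists_comp.1 hg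
  refine ⟨fun a => F fun v => a ((C.orderIsoOfFin hC).symm v), fun y => congrArg F ?_⟩
  ext v
  simp [← Finset.coe_orderIsoOfFin_apply]

end HypergraphMatching

lemma expect_bitSign_mul_bitSign {ι : Type*} [Fintype ι] [DecidableEq ι] (i : ι)
    (φ : (ι → Bool) → Bool) :
    𝔼 b : ι → Bool, bitSign (b i) * bitSign (φ b)
      = 2 * ((#{b : ι → Bool | b i = φ b} : ℝ) / 2 ^ Fintype.card ι) - 1 := by
  have hsign (b : ι → Bool) :
      bitSign (b i) * bitSign (φ b) = 2 * (if b i = φ b then 1 else 0) - 1 := by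
    cases b i <;> cases φ b <;> norm_num [bitSign]
  simp only [hsign]
  rw [Finset.expect_sub_distrib, Finset.expect_const univ_nonempty, ← Finset.mul_expect,
    Fintype.expect_eq_sum_div_card, Finset.sum_boole, Fintype.card_fun, Fintype.card_bool]
  push_cast
  rfl

theorem cube_le_of_decodable_matchings {k n : ℕ} {η ε : ℝ} {α : Type*} [Fintype α]
    {Enc : (Fin k → Bool) → Fin n → α} {H : Fin k → Finset (Finset (Fin n))}
    {f : Fin k → Finset (Fin n) → (Fin n → α) → Bool} (hk : 0 < k) (hn : 0 < n) (hη : 0 < η)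
    (hε : 0 < ε) (hH : ∀ i, IsMatching 3 (H i)) (hcard : k * (η * n) ≤ ∑ i, (#(H i) : ℝ))
    (hloc : ∀ i, ∀ C ∈ H i, DependsOn (f i C) (C : Set (Fin n)))
    (hprob : ∀ i, ∀ C ∈ H i,
      1 / 2 + ε / 2 ≤ (#{b : Fin k → Bool | b i = f i C (Enc b)} : ℝ) / 2 ^ k) :
    (k * (ε ^ 4 * η ^ 4)) ^ 3 ≤ 16 ^ 4 * (8 * 183500800 ^ 3) * (Fintype.card α : ℝ) ^ 31 * n
      * Real.log ((Fintype.card α : ℝ) * n) ^ 3 := by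
  have : Nonempty (Fin k) := ⟨⟨0, hk⟩⟩
  have : Nonempty (Fin n) := ⟨⟨0, hn⟩⟩
  choose F hF using fun e : Σ i, {C // C ∈ H i} =>
    exists_comp_orderEmbOfFin_of_dependsOn ((hH e.1).1 _ e.2.2) (hloc e.1 _ e.2.2)
  have hcorr (e : Σ i, {C // C ∈ H i}) :
      ε ≤ 𝔼 b : Fin k → Bool, bitSign (b e.1) * bitSign (f e.1 e.2.1 (Enc b)) := by
    rw [expect_bitSign_mul_bitSign, Fintype.card_fin]
    linarith [hprob e.1 _ e.2.2]
  have hcard' : η * Fintype.card (Fin k) * Fintype.card (Fin n)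
      ≤ Fintype.card (Σ i, {C // C ∈ H i}) := by
    simpa [mul_assoc, mul_left_comm] using hcard
  simpa only [Fintype.card_fin] using card_cube_le_of_decodable_triples
    (isMatchingFamily_orderEmbOfFin hH) Enc (F := fun e a => bitSign (F e a))
    (fun e a => by rw [sq, bitSign_mul_self]) hε hη hcard'
    fun e => (hcorr e).trans_eq (by simp only [← hF e]; rfl)

lemma le_one_of_half_add_half_le_card_div {k : ℕ} {s : Finset (Fin k → Bool)} {ε : ℝ}
    (h : 1 / 2 + ε / 2 ≤ (#s : ℝ) / 2 ^ k) : ε ≤ 1 := by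
  have hs : (#s : ℝ) ≤ 2 ^ k := by
    exact_mod_cast (Finset.card_le_univ s).trans_eq (by simp)
  linarith [h.trans (div_le_one_of_le₀ hs (by positivity))]

lemma one_le_log_mul {a n : ℝ} (ha : 1 ≤ a) (hn : 3 ≤ n) : 1 ≤ Real.log (a * n) := by
  rw [Real.le_log_iff_exp_le (by positivity)]
  nlinarith [Real.exp_one_lt_three]

lemma cube_le_div_of_pow_le {k n a L ε δ c : ℝ} (hn : 0 ≤ n) (hc : 0 ≤ c) (ha : 1 ≤ a)
    (hL : 1 ≤ L) (hε : 0 < ε) (hε1 : ε ≤ 1) (hδ : 0 < δ) (hεδ : ε * δ ≤ 3)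
    (h : (k * (ε ^ 4 * (ε * δ / 9) ^ 4)) ^ 3 ≤ c * a ^ 31 * n * L ^ 3) :
    k ^ 3 ≤ a ^ 41 * n * (81 * 9 ^ 12 * c) * L ^ 6 / (ε ^ 32 * δ ^ 16) := by
  rw [le_div_iff₀ (by positivity)]
  calc k ^ 3 * (ε ^ 32 * δ ^ 16)
      = 9 ^ 12 * (k * (ε ^ 4 * (ε * δ / 9) ^ 4)) ^ 3 * (ε ^ 4 * (ε * δ) ^ 4) := by ring
    _ ≤ 9 ^ 12 * (c * a ^ 31 * n * L ^ 3) * (1 ^ 4 * 3 ^ 4) := by gcongr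
    _ = 81 * 9 ^ 12 * c * n * (a ^ 31 * L ^ 3) := by ring
    _ ≤ 81 * 9 ^ 12 * c * n * (a ^ 41 * L ^ 6) := by gcongr <;> first | assumption | norm_num
    _ = a ^ 41 * n * (81 * 9 ^ 12 * c) * L ^ 6 := by ring

theorem gen_alphabet_three_ldc_lower_bound_general :
    ∃ c : ℝ, 0 < c ∧
      ∀ (k n : ℕ) (δ ε : ℝ) (α : Type*) (_ : Fintype α)
        (Enc : (Fin k → Bool) → Fin n → α)
        (H : Fin k → Finset (Finset (Fin n)))
        (f : Fin k → Finset (Fin n) → (Fin n → α) → Bool),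
        0 < n → 0 < δ → 0 < ε →
        (∀ i, IsMatching 3 (H i)) →
        k * (ε * δ * n / 9) ≤ ∑ i, (#(H i) : ℝ) →
        (∀ i, ∀ C ∈ H i, DependsOn (f i C) (C : Set (Fin n))) →
        (∀ i, ∀ C ∈ H i,
          (1 / 2 + ε / 2 : ℝ) ≤
            (#{b : Fin k → Bool | b i = f i C (Enc b)} : ℝ) / 2 ^ k) →
        (k : ℝ) ^ 3 ≤ (Fintype.card α : ℝ) ^ 41 * n * c *
            Real.log ((Fintype.card α : ℝ) * n) ^ 6 / (ε ^ 32 * δ ^ 16) := by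
  refine ⟨81 * 9 ^ 12 * (16 ^ 4 * (8 * 183500800 ^ 3)), by norm_num, ?_⟩
  intro k n δ ε α _ Enc H f hn hδ hε hH hcard hloc hprob
  rcases k.eq_zero_or_pos with rfl | hk
  · rw [Nat.cast_zero, zero_pow three_ne_zero]
    positivity
  have : Nonempty (Fin k) := ⟨⟨0, hk⟩⟩
  have : Nonempty α := ⟨Enc (fun _ => false) ⟨0, hn⟩⟩
  obtain ⟨i, -, hi⟩ : ∃ i ∈ univ, ε * δ * n / 9 ≤ (#(H i) : ℝ) :=
    Finset.exists_le_of_sum_le univ_nonempty (by simpa using hcard)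
  have hHi : 0 < #(H i) := Nat.cast_pos.1 (lt_of_lt_of_le (by positivity) hi)
  obtain ⟨C, hC⟩ := Finset.card_pos.1 hHi
  have hn3 : 3 ≤ n := (Nat.le_mul_of_pos_right 3 hHi).trans (hH i).mul_card_le
  have hε1 : ε ≤ 1 := le_one_of_half_add_half_le_card_div (hprob i C hC)
  have hεδ : 3 * (ε * δ / 9) ≤ 1 := by
    exact_mod_cast (hH i).mul_le_one_of_mul_le_card hn (by linarith)
  have ha : (1 : ℝ) ≤ Fintype.card α := Nat.one_le_cast.2 Fintype.card_pos
  have hcard' : k * (ε * δ / 9 * n) ≤ ∑ i, (#(H i) : ℝ) := by rwa [div_mul_eq_mul_div]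
  exact cube_le_div_of_pow_le n.cast_nonneg (by norm_num) ha
    (one_le_log_mul ha (by exact_mod_cast hn3)) hε hε1 hδ (by linarith)
    (cube_le_of_decodable_matchings hk hn (by positivity) hε hH hcard' hloc hprob)

/-- **Near-cubic 3-LDC lower bound over larger alphabets.** There is an absolute
constant `c > 0` such that: for every finite alphabet `α` and every code
`Enc : {0,1}^k → α^n` equipped with `3`-uniform hypergraph matchings `H i` with
`|H i| ≥ εδn/9`, and for each `i` and each `C ∈ H i` a function `f i C` depending
only on the coordinates in `C` such that
`Pr_{b uniform in {0,1}^k}[b_i = f_C(Enc(b)|_C)] ≥ 1/2 + ε/2`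
(the structure guaranteed by the Katz–Trevisan reduction for any `(3, δ, ε)`-LDC over
`α`), we have `k³ ≤ |α|⁴¹ · n · c · (log(|α| n))⁶ / (ε³² δ¹⁶)`. -/
theorem gen_alphabet_three_ldc_lower_bound :
    ∃ c : ℝ, 0 < c ∧
      ∀ (k n : ℕ) (δ ε : ℝ) (α : Type) (_ : Fintype α)
        (Enc : (Fin k → Bool) → Fin n → α)
        (H : Fin k → Finset (Finset (Fin n)))
        (f : Fin k → Finset (Fin n) → (Fin n → α) → Bool),
        0 < k → 0 < n → 0 < δ → 0 < ε →
        (∀ i, IsMatching 3 (H i)) →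
        (∀ i, ε * δ * n / 9 ≤ ((H i).card : ℝ)) →
        (∀ i, ∀ C ∈ H i, ∀ y y' : Fin n → α,
          (∀ v ∈ C, y v = y' v) → f i C y = f i C y') →
        (∀ i, ∀ C ∈ H i,
          (1 / 2 + ε / 2 : ℝ) ≤
            ((Finset.univ.filter (fun b : Fin k → Bool =>
              b i = f i C (Enc b))).card : ℝ) / 2 ^ k) →
        (k : ℝ) ^ 3 ≤ (Fintype.card α : ℝ) ^ 41 * n * c *
            Real.log ((Fintype.card α : ℝ) * n) ^ 6 / (ε ^ 32 * δ ^ 16) := by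
  obtain ⟨c, hc, h⟩ := gen_alphabet_three_ldc_lower_bound_general
  exact ⟨c, hc, fun k n δ ε α _ Enc H f _ hn hδ hε hH hcard hloc hprob =>
    h k n δ ε α _ Enc H f hn hδ hε hH
      (by simpa using Finset.card_nsmul_le_sum univ _ _ fun i _ => hcard i) hloc hprob⟩
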